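/- arXiv:1509.02803 — 4 statements merged into one kernel-verified Lean document; each statement's English description precedes it below -/
import Mathlib

section
/- Let σ, M > 0 and let f : ℝ → ℂ be bandlimited with parameters (σ, M). Then for all bounded self-adjoint operators A and B on a complex Hilbert space H, the operator-norm estimate ‖f(A) − f(B)‖ ≤ σ·M·‖A − B‖ holds. -/
/-!
Put `φ z = F (B + z (A - B))`, evaluated through the Taylor series of `F`. This operator-valued
function is entire of exponential type `σ ‖A - B‖`, and on `ℝ` it is bounded by `M` because
`B + x (A - B)` is self-adjoint. By Phragmén–Lindelöf it is bandlimited with parameters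
`(σ ‖A - B‖, M)`, so Bernstein's inequality bounds its derivative on `ℝ` by `σ ‖A - B‖ M`, and the
claim is the mean value inequality for `φ 1 - φ 0`.

Bernstein's inequality rescales to `σ = π` at the point `0`. There the function
`F z - F 0 cos (π z) - (F' 0 / π) sin (π z)` equals `z ^ 2 g z` with `g` entire. As `g` decays
quadratically, Poisson summation gives `∑ (-1) ^ n g (n + 1 / 2) = 0`, which is M. Riesz's formula
expressing `F' 0` through the values `F (n + 1 / 2)`.
-/

open Complex Filter MeasureTheory Topology
open scoped Nat Real Interval

section ContourShift

variable {E : Type*} [NormedAddCommGroup E] [NormedSpace ℂ E] {G : ℂ → E} {C y : ℝ}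

theorem norm_intervalIntegral_sub_add_mul_I_le
    (hG : DifferentiableOn ℂ G {z | z.im ∈ [[0, y]]})
    (hbound : ∀ z : ℂ, z.im ∈ [[0, y]] → ‖G z‖ ≤ C * (1 + z.re ^ 2)⁻¹) (T : ℝ) :
    ‖(∫ x in -T..T, G x) - ∫ x in -T..T, G (x + y * I)‖ ≤ 2 * C * |y| * (1 + T ^ 2)⁻¹ := by
  have hside : ∀ s : ℝ, s ^ 2 = T ^ 2 →
      ‖∫ t in (0 : ℝ)..y, G (s + t * I)‖ ≤ C * (1 + T ^ 2)⁻¹ * |y| := fun s hs => by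
    have hle : ∀ t ∈ Ι 0 y, ‖G (s + t * I)‖ ≤ C * (1 + T ^ 2)⁻¹ := fun t ht => by
      simpa [hs] using hbound (s + t * I) (by simpa using Set.uIoc_subset_uIcc ht)
    simpa using intervalIntegral.norm_integral_le_of_norm_le_const hle
  have hrect := integral_boundary_rect_eq_zero_of_differentiableOn G ⟨-T, 0⟩ ⟨T, y⟩
    (hG.mono fun z hz => hz.2)
  simp only [ofReal_zero, zero_mul, add_zero] at hrect
  have hdiff : (∫ x in -T..T, G x) - ∫ x in -T..T, G (x + y * I) =
      I • (∫ t in (0 : ℝ)..y, G ((-T : ℝ) + t * I)) - I • ∫ t in (0 : ℝ)..y, G (T + t * I) := by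
    rw [← sub_eq_zero, ← hrect]
    abel
  calc _ ≤ ‖∫ t in (0 : ℝ)..y, G ((-T : ℝ) + t * I)‖ + ‖∫ t in (0 : ℝ)..y, G (T + t * I)‖ := by
        rw [hdiff]
        exact (norm_sub_le _ _).trans_eq (by simp only [norm_smul, norm_I, one_mul])
    _ ≤ C * (1 + T ^ 2)⁻¹ * |y| + C * (1 + T ^ 2)⁻¹ * |y| :=
        add_le_add (hside _ (neg_sq T)) (hside T rfl)
    _ = 2 * C * |y| * (1 + T ^ 2)⁻¹ := by ring

theorem integral_eq_integral_add_mul_I (hG : DifferentiableOn ℂ G {z | z.im ∈ [[0, y]]})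
    (hbound : ∀ z : ℂ, z.im ∈ [[0, y]] → ‖G z‖ ≤ C * (1 + z.re ^ 2)⁻¹) :
    ∫ x : ℝ, G x = ∫ x : ℝ, G (x + y * I) := by
  have hint : ∀ s ∈ [[0, y]], Integrable fun x : ℝ => G (x + s * I) := fun s hs => by
    have hcont : Continuous fun x : ℝ => G (x + s * I) :=
      hG.continuousOn.comp_continuous (by fun_prop) fun x => by simpa using hs
    refine (integrable_inv_one_add_sq.const_mul C).mono' hcont.aestronglyMeasurable
      (ae_of_all _ fun x => ?_)
    simpa using hbound (x + s * I) (by simpa using hs)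
  have hlim : ∀ s ∈ [[0, y]],
      Tendsto (fun T : ℝ => ∫ x in -T..T, G (x + s * I)) atTop (𝓝 (∫ x : ℝ, G (x + s * I))) :=
    fun s hs => intervalIntegral_tendsto_integral (hint s hs) tendsto_neg_atTop_atBot tendsto_id
  have hdiff : Tendsto (fun T : ℝ => (∫ x in -T..T, G x) - ∫ x in -T..T, G (x + y * I))
      atTop (𝓝 0) := by
    refine squeeze_zero_norm (norm_intervalIntegral_sub_add_mul_I_le hG hbound) ?_
    have : Tendsto (fun T : ℝ => (1 + T ^ 2)⁻¹) atTop (𝓝 0) :=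
      tendsto_inv_atTop_zero.comp
        (tendsto_atTop_add_const_left _ _ (tendsto_pow_atTop two_ne_zero))
    simpa using this.const_mul (2 * C * |y|)
  have hzero := hlim 0 Set.left_mem_uIcc
  simp only [ofReal_zero, zero_mul, add_zero] at hzero
  exact sub_eq_zero.mp (tendsto_nhds_unique (hzero.sub (hlim y Set.right_mem_uIcc)) hdiff)

theorem inv_one_add_norm_sq_le_re (z : ℂ) : (1 + ‖z‖ ^ 2)⁻¹ ≤ (1 + z.re ^ 2)⁻¹ := by
  gcongr ?_⁻¹
  gcongr 1 + ?_
  exact sq_le_sq' (neg_le_of_abs_le (abs_re_le_norm z)) (re_le_norm z)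

-- Decay in `‖z‖`, not merely in `z.re`, makes the integral over the line `im z = s` vanish as
-- `s → ∞` without any help from an exponential factor.
theorem integral_eq_zero_of_norm_le_of_im_nonneg (hG : DifferentiableOn ℂ G {z | 0 ≤ z.im})
    (hbound : ∀ z : ℂ, 0 ≤ z.im → ‖G z‖ ≤ C * (1 + ‖z‖ ^ 2)⁻¹) : ∫ x : ℝ, G x = 0 := by
  have hC : 0 ≤ C := by simpa using (norm_nonneg _).trans (hbound 0 le_rfl)
  have hbound_re : ∀ z : ℂ, 0 ≤ z.im → ‖G z‖ ≤ C * (1 + z.re ^ 2)⁻¹ := fun z hz =>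
    (hbound z hz).trans (mul_le_mul_of_nonneg_left (inv_one_add_norm_sq_le_re z) hC)
  have hshift : ∀ s : ℝ, 0 ≤ s → ∫ x : ℝ, G x = ∫ x : ℝ, G (x + s * I) := fun s hs => by
    have hstrip : ∀ z : ℂ, z.im ∈ [[0, s]] → 0 ≤ z.im := fun z hz => by
      rw [Set.uIcc_of_le hs] at hz
      exact hz.1
    exact integral_eq_integral_add_mul_I (hG.mono hstrip) fun z hz => hbound_re z (hstrip z hz)
  have hpointwise : ∀ x : ℝ, Tendsto (fun s : ℝ => G (x + s * I)) atTop (𝓝 0) := fun x => by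
    have hnorm : Tendsto (fun s : ℝ => ‖(x + s * I : ℂ)‖) atTop atTop :=
      tendsto_atTop_mono (fun s => by simpa using im_le_norm (x + s * I)) tendsto_id
    have hmajorant : Tendsto (fun s : ℝ => C * (1 + ‖(x + s * I : ℂ)‖ ^ 2)⁻¹) atTop (𝓝 0) := by
      simpa using (tendsto_inv_atTop_zero.comp (tendsto_atTop_add_const_left _ 1
        ((tendsto_pow_atTop two_ne_zero).comp hnorm))).const_mul C
    refine squeeze_zero_norm' ?_ hmajorant
    filter_upwards [eventually_ge_atTop 0] with s hs using hbound _ (by simpa using hs)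
  have hlim : Tendsto (fun s : ℝ => ∫ x : ℝ, G (x + s * I)) atTop (𝓝 (∫ _ : ℝ, (0 : E))) := by
    refine tendsto_integral_filter_of_dominated_convergence (fun x => C * (1 + x ^ 2)⁻¹) ?_ ?_
      (integrable_inv_one_add_sq.const_mul C) (ae_of_all _ hpointwise)
    all_goals filter_upwards [eventually_ge_atTop 0] with s hs
    · exact (hG.continuousOn.comp_continuous (by fun_prop) fun x => by
        simpa using hs).aestronglyMeasurable
    · exact ae_of_all _ fun x => by simpa using hbound_re (x + s * I) (by simpa using hs)
  have hconst : ∀ᶠ s : ℝ in atTop, ∫ x : ℝ, G x = ∫ x : ℝ, G (x + s * I) :=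
    (eventually_ge_atTop 0).mono hshift
  simpa using tendsto_nhds_unique (tendsto_const_nhds.congr' hconst) hlim

end ContourShift

section EdgeFrequencies

variable {g : ℂ → ℂ} {σ K : ℝ}

theorem norm_mul_cexp_le {l : ℝ} (hl : σ ≤ |l|)
    (hbound : ∀ z : ℂ, ‖g z‖ ≤ K * Real.exp (σ * |z.im|) * (1 + ‖z‖ ^ 2)⁻¹)
    {z : ℂ} (hz : l * z.im ≤ 0) : ‖g z * cexp (-(l * z * I))‖ ≤ K * (1 + ‖z‖ ^ 2)⁻¹ := by
  have hK : 0 ≤ K := by simpa using (norm_nonneg _).trans (hbound 0)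
  have hexp : Real.exp (σ * |z.im|) * Real.exp (l * z.im) ≤ 1 := by
    rw [← Real.exp_add, Real.exp_le_one_iff, ← neg_neg (l * z.im), ← abs_of_nonpos hz, abs_mul]
    linarith [mul_le_mul_of_nonneg_right hl (abs_nonneg z.im)]
  calc ‖g z * cexp (-(l * z * I))‖ = ‖g z‖ * Real.exp (l * z.im) := by
        rw [norm_mul, norm_exp]; simp
    _ ≤ K * Real.exp (σ * |z.im|) * (1 + ‖z‖ ^ 2)⁻¹ * Real.exp (l * z.im) := by
        gcongr; exact hbound z
    _ = K * (1 + ‖z‖ ^ 2)⁻¹ * (Real.exp (σ * |z.im|) * Real.exp (l * z.im)) := by ring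
    _ ≤ K * (1 + ‖z‖ ^ 2)⁻¹ := mul_le_of_le_one_right (by positivity) hexp

theorem integral_mul_cexp_eq_zero (hg : Differentiable ℂ g)
    (hbound : ∀ z : ℂ, ‖g z‖ ≤ K * Real.exp (σ * |z.im|) * (1 + ‖z‖ ^ 2)⁻¹)
    {l : ℝ} (hl : σ ≤ |l|) : ∫ x : ℝ, g x * cexp (-(l * x * I)) = 0 := by
  have hdiff : Differentiable ℂ fun z => g z * cexp (-(l * z * I)) := by fun_prop
  rcases le_total l 0 with hl₀ | hl₀
  · exact integral_eq_zero_of_norm_le_of_im_nonneg hdiff.differentiableOn fun z hz =>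
      norm_mul_cexp_le hl hbound (mul_nonpos_of_nonpos_of_nonneg hl₀ hz)
  · have hreflect : Differentiable ℂ fun z => g (-z) * cexp (-(l * -z * I)) := by fun_prop
    rw [← integral_neg_eq_self]
    push_cast
    refine integral_eq_zero_of_norm_le_of_im_nonneg (C := K) hreflect.differentiableOn
      fun z hz => ?_
    have hz' : l * (-z).im ≤ 0 := mul_nonpos_of_nonneg_of_nonpos hl₀ (by simpa using hz)
    simpa only [norm_neg] using norm_mul_cexp_le hl hbound hz'

theorem fourier_cexp_pi_mul_I_mul_eq_zero (hg : Differentiable ℂ g)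
    (hbound : ∀ z : ℂ, ‖g z‖ ≤ K * Real.exp (π * |z.im|) * (1 + ‖z‖ ^ 2)⁻¹) (n : ℤ) :
    FourierTransform.fourier (fun x : ℝ => cexp (π * x * I) * g x) n = 0 := by
  have hn : 1 ≤ |2 * (n : ℝ) - 1| := by
    exact_mod_cast Int.one_le_abs (show (2 * n - 1 : ℤ) ≠ 0 by lia)
  have hl : π ≤ |(2 * n - 1) * π| := by
    rw [abs_mul, abs_of_pos Real.pi_pos]
    exact le_mul_of_one_le_left Real.pi_pos.le hn
  rw [Real.fourier_real_eq_integral_exp_smul, ← integral_mul_cexp_eq_zero hg hbound hl]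
  refine integral_congr_ae (ae_of_all _ fun x => ?_)
  simp only [smul_eq_mul]
  rw [← mul_assoc, ← Complex.exp_add, mul_comm]
  congr 2
  push_cast
  ring

theorem cexp_pi_mul_half_add_int_mul_I (n : ℤ) : cexp (π * (1 / 2 + n) * I) = I * (-1) ^ n := by
  rw [← exp_pi_mul_I, ← exp_int_mul]
  nth_rw 2 [← exp_pi_div_two_mul_I]
  rw [← Complex.exp_add]
  ring_nf

theorem tsum_neg_one_zpow_mul_add_half_eq_zero (hg : Differentiable ℂ g)
    (hbound : ∀ z : ℂ, ‖g z‖ ≤ K * Real.exp (π * |z.im|) * (1 + ‖z‖ ^ 2)⁻¹) :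
    ∑' n : ℤ, (-1) ^ n * g (n + 1 / 2) = 0 := by
  have hK : 0 ≤ K := by simpa using (norm_nonneg _).trans (hbound 0)
  set G : ℝ → ℂ := fun x => cexp (π * x * I) * g x with hG
  have hGc : Continuous G := by
    have := hg.continuous
    fun_prop
  have hdecay : G =O[cocompact ℝ] fun x : ℝ => |x| ^ (-2 : ℝ) := by
    refine Asymptotics.IsBigO.of_bound K ?_
    filter_upwards [isCompact_singleton.compl_mem_cocompact] with x (hx : x ≠ 0)
    have hx : 0 < |x| := abs_pos.mpr hx
    calc ‖G x‖ = ‖g x‖ := by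
          rw [norm_mul, ← ofReal_mul, norm_exp_ofReal_mul_I, one_mul]
      _ ≤ K * (1 + |x| ^ 2)⁻¹ := by simpa using hbound x
      _ ≤ K * (|x| ^ 2)⁻¹ := by gcongr; linarith
      _ = K * ‖|x| ^ (-2 : ℝ)‖ := by
          rw [Real.norm_of_nonneg (by positivity), Real.rpow_neg hx.le, Real.rpow_two]
  have hfourier : ∀ n : ℤ, FourierTransform.fourier G n = 0 :=
    fourier_cexp_pi_mul_I_mul_eq_zero hg hbound
  have hpoisson := Real.tsum_eq_tsum_fourier_of_rpow_decay_of_summable hGc one_lt_two hdecay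
    (by simpa only [hfourier] using summable_zero) (1 / 2)
  have hterm : ∀ n : ℤ, G (1 / 2 + n) = I * ((-1) ^ n * g (n + 1 / 2)) := fun n => by
    simp only [hG]
    push_cast
    rw [cexp_pi_mul_half_add_int_mul_I, mul_assoc, add_comm (1 / 2 : ℂ)]
  simpa only [hterm, hfourier, tsum_mul_left, zero_mul, tsum_zero, mul_eq_zero, I_ne_zero,
    false_or] using hpoisson

end EdgeFrequencies

section Bandlimited

variable {E : Type*} [NormedAddCommGroup E] [NormedSpace ℂ E] {σ M N : ℝ} {F G : ℂ → E}

/-- The class of entire functions whose restrictions to `ℝ` are the bandlimited functions with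
parameters `(σ, M)`, with values in an arbitrary complex normed space so as to include
operator-valued functions. -/
structure IsBandlimited (σ M : ℝ) (F : ℂ → E) : Prop where
  differentiable : Differentiable ℂ F
  norm_le : ∀ z : ℂ, ‖F z‖ ≤ M * Real.exp (σ * |z.im|)

namespace IsBandlimited

theorem norm_ofReal_le (hF : IsBandlimited σ M F) (x : ℝ) : ‖F x‖ ≤ M := by
  simpa using hF.norm_le x

theorem bound_nonneg (hF : IsBandlimited σ M F) : 0 ≤ M :=
  (norm_nonneg _).trans (hF.norm_ofReal_le 0)

theorem sub (hF : IsBandlimited σ M F) (hG : IsBandlimited σ N G) :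
    IsBandlimited σ (M + N) fun z => F z - G z where
  differentiable := hF.differentiable.sub hG.differentiable
  norm_le z := by
    rw [add_mul]
    exact (norm_sub_le _ _).trans (add_le_add (hF.norm_le z) (hG.norm_le z))

theorem clm_comp {E' : Type*} [NormedAddCommGroup E'] [NormedSpace ℂ E']
    (hF : IsBandlimited σ M F) (l : E →L[ℂ] E') : IsBandlimited σ (‖l‖ * M) fun z => l (F z) where
  differentiable := l.differentiable.comp hF.differentiable
  norm_le z := by
    rw [mul_assoc]
    exact l.le_opNorm_of_le (hF.norm_le z)

theorem comp_add_ofReal_mul (hF : IsBandlimited σ M F) (hσ : 0 ≤ σ) (z : ℂ) (c : ℝ) :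
    IsBandlimited (σ * |c|) (M * Real.exp (σ * |z.im|)) fun w => F (z + c * w) where
  differentiable := hF.differentiable.comp (by fun_prop)
  norm_le w := by
    have him : |(z + c * w).im| ≤ |z.im| + |c| * |w.im| := by
      simpa [abs_mul] using abs_add_le z.im (c * w.im)
    calc ‖F (z + c * w)‖ ≤ M * Real.exp (σ * |(z + c * w).im|) := hF.norm_le _
      _ ≤ M * Real.exp (σ * (|z.im| + |c| * |w.im|)) := by
          have := hF.bound_nonneg
          gcongr
      _ = M * Real.exp (σ * |z.im|) * Real.exp (σ * |c| * |w.im|) := by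
          rw [mul_assoc M, ← Real.exp_add, mul_add, mul_assoc σ]

protected theorem cos : IsBandlimited 1 1 Complex.cos where
  differentiable := differentiable_cos
  norm_le z := by
    have hexp : ∀ w : ℂ, |w.re| = |z.im| → ‖cexp w‖ ≤ Real.exp |z.im| := fun w hw => by
      rw [norm_exp, ← hw]
      exact Real.exp_le_exp.mpr (le_abs_self _)
    calc ‖Complex.cos z‖ = ‖cexp (z * I) + cexp (-z * I)‖ / 2 := by
          rw [Complex.cos, norm_div, Complex.norm_ofNat]
      _ ≤ (Real.exp |z.im| + Real.exp |z.im|) / 2 := by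
          gcongr
          exact norm_add_le_of_le (hexp _ (by simp)) (hexp _ (by simp))
      _ = 1 * Real.exp (1 * |z.im|) := by ring_nf

theorem cos_add_pi_mul (z : ℂ) :
    IsBandlimited π (Real.exp |z.im|) fun w => Complex.cos (z + π * w) := by
  simpa [abs_of_pos Real.pi_pos] using IsBandlimited.cos.comp_add_ofReal_mul zero_le_one z π

theorem exists_norm_le_of_sq_mul_eq {h g : ℂ → ℂ} (hh : IsBandlimited σ M h) (hg : Continuous g)
    (hsq : ∀ z, z ^ 2 * g z = h z) :
    ∃ K, ∀ z, ‖g z‖ ≤ K * Real.exp (σ * |z.im|) * (1 + ‖z‖ ^ 2)⁻¹ := by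
  have hcont : Continuous fun z => ‖g z‖ * (1 + ‖z‖ ^ 2) * Real.exp (-(σ * |z.im|)) := by fun_prop
  obtain ⟨C, hC⟩ := (isCompact_closedBall (0 : ℂ) 1).exists_bound_of_continuousOn hcont.continuousOn
  refine ⟨max C (2 * M), fun z => ?_⟩
  rw [le_mul_inv_iff₀ (by positivity)]
  rcases le_total ‖z‖ 1 with hz | hz
  · calc ‖g z‖ * (1 + ‖z‖ ^ 2)
        = ‖g z‖ * (1 + ‖z‖ ^ 2) * Real.exp (-(σ * |z.im|)) * Real.exp (σ * |z.im|) := by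
          rw [mul_assoc _ (Real.exp _), ← Real.exp_add, neg_add_cancel, Real.exp_zero, mul_one]
      _ ≤ max C (2 * M) * Real.exp (σ * |z.im|) := by
          gcongr
          exact ((le_abs_self _).trans (hC z (by simpa using hz))).trans (le_max_left _ _)
  · calc ‖g z‖ * (1 + ‖z‖ ^ 2) ≤ ‖g z‖ * (2 * ‖z‖ ^ 2) := by
          gcongr
          nlinarith
      _ = 2 * ‖h z‖ := by
          rw [← hsq, norm_mul, norm_pow]
          ring
      _ ≤ 2 * (M * Real.exp (σ * |z.im|)) := by
          gcongr
          exact hh.norm_le z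
      _ ≤ max C (2 * M) * Real.exp (σ * |z.im|) := by
          rw [← mul_assoc]
          gcongr
          exact le_max_right _ _

end IsBandlimited

theorem exists_differentiable_sq_mul_eq {h : ℂ → ℂ} (hh : Differentiable ℂ h) (h₀ : h 0 = 0)
    (h₁ : deriv h 0 = 0) : ∃ g : ℂ → ℂ, Differentiable ℂ g ∧ ∀ z, z ^ 2 * g z = h z := by
  have hdslope : ∀ {u : ℂ → ℂ}, Differentiable ℂ u → Differentiable ℂ (dslope u 0) := fun hu =>
    differentiableOn_univ.mp
      ((differentiableOn_dslope Filter.univ_mem).mpr hu.differentiableOn)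
  have hmul : ∀ {u : ℂ → ℂ}, u 0 = 0 → ∀ z, z * dslope u 0 z = u z := fun {u} hu z => by
    simpa [hu] using sub_smul_dslope u 0 z
  refine ⟨dslope (dslope h 0) 0, hdslope (hdslope hh), fun z => ?_⟩
  rw [pow_two, mul_assoc, hmul (by rwa [dslope_same]), hmul h₀]

theorem summable_one_div_int_add_half_sq : Summable fun n : ℤ => 1 / ((n : ℝ) + 1 / 2) ^ 2 := by
  simpa using (Real.summable_one_div_int_add_rpow (1 / 2) 2).mpr one_lt_two

theorem int_add_half_ne_zero (n : ℤ) : (n : ℂ) + 1 / 2 ≠ 0 := fun h => by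
  have : (2 * n + 1 : ℂ) = 0 := by linear_combination 2 * h
  have : 2 * n + 1 = 0 := by exact_mod_cast this
  lia

theorem cos_pi_mul_int_add_half (n : ℤ) : Complex.cos (π * (n + 1 / 2)) = 0 :=
  Complex.cos_eq_zero_iff.mpr ⟨n, by ring⟩

theorem sin_pi_mul_int_add_half (n : ℤ) : Complex.sin (π * (n + 1 / 2)) = (-1) ^ n := by
  have hreal : Real.sin (π / 2 + n * π) = (-1) ^ n := by
    rw [Real.sin_add_int_mul_pi, Real.sin_pi_div_two, mul_one]
  rw [show (π * (n + 1 / 2) : ℂ) = (π / 2 + n * π : ℝ) by push_cast; ring, ← ofReal_sin, hreal]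
  push_cast
  rfl

namespace IsBandlimited

theorem sub_const_mul_cos_sub_const_mul_sin {F : ℂ → ℂ} (hF : IsBandlimited π M F) (a b : ℂ) :
    ∃ N, IsBandlimited π N fun z =>
      F z - a * Complex.cos (π * z) - b * Complex.sin (π * z) := by
  have hcos : IsBandlimited π (‖ContinuousLinearMap.mul ℂ ℂ a‖ * 1) fun z =>
      a * Complex.cos (π * z) := by
    simpa using (cos_add_pi_mul 0).clm_comp (ContinuousLinearMap.mul ℂ ℂ a)
  have hsin : IsBandlimited π (‖ContinuousLinearMap.mul ℂ ℂ b‖ * 1) fun z =>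
      b * Complex.sin (π * z) := by
    simpa [← Complex.cos_sub_pi_div_two, neg_add_eq_sub] using
      (cos_add_pi_mul (-(π / 2 : ℝ))).clm_comp (ContinuousLinearMap.mul ℂ ℂ b)
  exact ⟨_, (hF.sub hcos).sub hsin⟩

theorem norm_neg_one_zpow_mul_div_le {F : ℂ → ℂ} (hF : IsBandlimited σ M F) (n : ℤ) :
    ‖(-1) ^ n * F (n + 1 / 2) / (n + 1 / 2) ^ 2‖ ≤ M * (1 / ((n : ℝ) + 1 / 2) ^ 2) := by
  have hnode : (n + 1 / 2 : ℂ) = (n + 1 / 2 : ℝ) := by push_cast; rfl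
  rw [hnode, norm_div, norm_mul, norm_zpow, norm_neg, norm_one, one_zpow, one_mul, norm_pow,
    norm_real, Real.norm_eq_abs, sq_abs, mul_one_div]
  gcongr
  exact hF.norm_ofReal_le _

theorem tsum_neg_one_zpow_mul_div_eq {F : ℂ → ℂ} (hF : IsBandlimited π M F) :
    ∑' n : ℤ, (-1) ^ n * F (n + 1 / 2) / (n + 1 / 2) ^ 2 =
      deriv F 0 / π * ∑' n : ℤ, ((1 / ((n : ℝ) + 1 / 2) ^ 2 : ℝ) : ℂ) := by
  have hπ : (π : ℂ) ≠ 0 := ofReal_ne_zero.mpr Real.pi_ne_zero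
  set b := deriv F 0 / π with hb
  obtain ⟨N, hh⟩ := hF.sub_const_mul_cos_sub_const_mul_sin (F 0) b
  have hderiv :
      deriv (fun z => F z - F 0 * Complex.cos (π * z) - b * Complex.sin (π * z)) 0 = 0 := by
    have hlin : HasDerivAt (fun z : ℂ => π * z) π 0 := by
      simpa using (hasDerivAt_id (0 : ℂ)).const_mul (π : ℂ)
    refine (((hF.differentiable 0).hasDerivAt.sub (hlin.ccos.const_mul (F 0))).sub
      (hlin.csin.const_mul b)).deriv.trans ?_
    simp [hb, hπ]
  obtain ⟨g, hg, hsq⟩ := exists_differentiable_sq_mul_eq hh.differentiable (by simp) hderiv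
  obtain ⟨K, hK⟩ := hh.exists_norm_le_of_sq_mul_eq hg.continuous hsq
  have hterm : ∀ n : ℤ, (-1) ^ n * g (n + 1 / 2) =
      (-1) ^ n * F (n + 1 / 2) / (n + 1 / 2) ^ 2 - b * (1 / ((n : ℝ) + 1 / 2) ^ 2 : ℝ) :=
    fun n => by
      have hnode := hsq (n + 1 / 2)
      rw [cos_pi_mul_int_add_half, sin_pi_mul_int_add_half] at hnode
      have hne := pow_ne_zero 2 (int_add_half_ne_zero n)
      have hsign : (-1 : ℂ) ^ n * (-1) ^ n = 1 := by rw [← mul_zpow]; simp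
      push_cast
      rw [mul_one_div, ← sub_div, eq_div_iff hne]
      linear_combination (-1) ^ n * hnode - b * hsign
  have hsummable : Summable fun n : ℤ => (-1) ^ n * F (n + 1 / 2) / (n + 1 / 2) ^ 2 :=
    (summable_one_div_int_add_half_sq.mul_left M).of_norm_bounded hF.norm_neg_one_zpow_mul_div_le
  have hzero := tsum_neg_one_zpow_mul_add_half_eq_zero hg hK
  simp only [hterm] at hzero
  rwa [hsummable.tsum_sub ((summable_ofReal.mpr summable_one_div_int_add_half_sq).mul_left b),
    tsum_mul_left, sub_eq_zero] at hzero

theorem norm_deriv_zero_le_pi_mul {F : ℂ → ℂ} (hF : IsBandlimited π M F) :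
    ‖deriv F 0‖ ≤ π * M := by
  set S := ∑' n : ℤ, 1 / ((n : ℝ) + 1 / 2) ^ 2 with hS
  have hS₀ : 0 < S :=
    summable_one_div_int_add_half_sq.tsum_pos (fun n => by positivity) 0 (by norm_num)
  have hle : ‖deriv F 0‖ / π * S ≤ M * S :=
    calc ‖deriv F 0‖ / π * S = ‖deriv F 0 / π * (S : ℂ)‖ := by
          rw [norm_mul, norm_div, norm_real, norm_real, Real.norm_of_nonneg Real.pi_nonneg,
            Real.norm_of_nonneg hS₀.le]
      _ = ‖∑' n : ℤ, (-1) ^ n * F (n + 1 / 2) / (n + 1 / 2) ^ 2‖ := by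
          rw [hF.tsum_neg_one_zpow_mul_div_eq, hS, ofReal_tsum]
      _ ≤ M * S := tsum_of_norm_bounded
          (summable_one_div_int_add_half_sq.hasSum.mul_left M) hF.norm_neg_one_zpow_mul_div_le
  rw [← div_le_iff₀' Real.pi_pos]
  exact le_of_mul_le_mul_right hle hS₀

theorem apply_eq_apply (hF : IsBandlimited 0 M F) (z w : ℂ) : F z = F w :=
  hF.differentiable.apply_eq_apply_of_bounded (isBounded_iff_forall_norm_le.mpr
    ⟨M, Set.forall_mem_range.mpr fun u => by simpa using hF.norm_le u⟩) z w

theorem norm_deriv_le (hF : IsBandlimited σ M F) (hσ : 0 ≤ σ) (z : ℂ) :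
    ‖deriv F z‖ ≤ σ * (M * Real.exp (σ * |z.im|)) := by
  rcases hσ.eq_or_lt with rfl | hσ
  · rw [show F = fun _ => F 0 from funext fun w => hF.apply_eq_apply w 0]
    simp
  · have hM := hF.bound_nonneg
    refine NormedSpace.norm_le_dual_bound ℂ _ (by positivity) fun l => ?_
    have hscale : σ * |π / σ| = π := by
      rw [abs_of_pos (by positivity), mul_div_cancel₀ _ hσ.ne']
    have hG := (hF.comp_add_ofReal_mul hσ.le z (π / σ)).clm_comp l
    rw [hscale] at hG
    have hderiv : deriv (fun w => l (F (z + (π / σ : ℝ) * w))) 0 = (π / σ : ℝ) * l (deriv F z) := by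
      have hlin : HasDerivAt (fun w : ℂ => z + (π / σ : ℝ) * w) (π / σ : ℝ) 0 := by
        simpa using ((hasDerivAt_id (0 : ℂ)).const_mul ((π / σ : ℝ) : ℂ)).const_add z
      have hFz : HasDerivAt F (deriv F z) (z + (π / σ : ℝ) * 0) := by
        simpa using (hF.differentiable z).hasDerivAt
      simpa [Function.comp_def] using (l.hasFDerivAt.comp_hasDerivAt 0 (hFz.scomp 0 hlin)).deriv
    have hle := hG.norm_deriv_zero_le_pi_mul
    rw [hderiv, norm_mul, norm_real, Real.norm_of_nonneg (by positivity)] at hle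
    have := Real.pi_pos
    field_simp at hle ⊢
    linarith

protected theorem iteratedDeriv [CompleteSpace E] (hF : IsBandlimited σ M F) (hσ : 0 ≤ σ) (n : ℕ) :
    IsBandlimited σ (σ ^ n * M) (iteratedDeriv n F) := by
  induction n with
  | zero => simpa using hF
  | succ n ih =>
    rw [iteratedDeriv_succ]
    refine ⟨ih.differentiable.deriv, fun z => (ih.norm_deriv_le hσ z).trans_eq ?_⟩
    rw [pow_succ', mul_assoc σ, mul_assoc σ]

theorem norm_sub_le (hF : IsBandlimited σ M F) (hσ : 0 ≤ σ) (x y : ℝ) :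
    ‖F x - F y‖ ≤ σ * M * |x - y| := by
  have hle : ∀ z ∈ imLm ⁻¹' {0}, ‖deriv F z‖ ≤ σ * M := fun z hz => by
    simpa [show z.im = 0 from hz] using hF.norm_deriv_le hσ z
  have hconvex : Convex ℝ (imLm ⁻¹' {0}) := (convex_singleton 0).linear_preimage imLm
  simpa [← ofReal_sub, norm_real] using hconvex.norm_image_sub_le_of_norm_deriv_le
    (x := (y : ℂ)) (y := (x : ℂ)) (fun z _ => hF.differentiable z) hle (ofReal_im y) (ofReal_im x)

end IsBandlimited

end Bandlimited

section HalfPlane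

variable {E : Type*} [NormedAddCommGroup E] [NormedSpace ℂ E] {τ M C : ℝ} {F : ℂ → E}

theorem norm_le_mul_exp_im_of_im_nonneg (hF : Differentiable ℂ F) (hτ : 0 ≤ τ)
    (hreal : ∀ x : ℝ, ‖F x‖ ≤ M) (hgrowth : ∀ z, ‖F z‖ ≤ C * Real.exp (τ * ‖z‖))
    {z : ℂ} (hz : 0 ≤ z.im) : ‖F z‖ ≤ M * Real.exp (τ * z.im) := by
  set G : ℂ → E := fun w => cexp (-(τ * w)) • F (I * w)
  have hnorm : ∀ w, ‖G w‖ = Real.exp (-(τ * w.re)) * ‖F (I * w)‖ := fun w => by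
    rw [norm_smul, norm_exp, neg_re, re_ofReal_mul]
  have hle : ∀ w, ‖G w‖ ≤ Real.exp (-(τ * w.re)) * (C * Real.exp (τ * ‖w‖)) := fun w => by
    rw [hnorm]
    gcongr
    simpa using hgrowth (I * w)
  have hC : 0 ≤ C := by simpa using (norm_nonneg _).trans (hgrowth 0)
  have hexp : G =O[Bornology.cobounded ℂ ⊓ 𝓟 {w | 0 < w.re}] fun w =>
      Real.exp (τ * ‖w‖ ^ (1 : ℝ)) := by
    refine Asymptotics.IsBigO.of_bound C (eventually_inf_principal.mpr (.of_forall fun w hw => ?_))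
    rw [Real.rpow_one, Real.norm_eq_abs, Real.abs_exp]
    refine (hle w).trans (mul_le_of_le_one_left (by positivity) ?_)
    exact Real.exp_le_one_iff.mpr (neg_nonpos.mpr (mul_nonneg hτ hw.le))
  have hre : IsBoundedUnder (· ≤ ·) atTop fun x : ℝ => ‖G x‖ := by
    refine isBoundedUnder_of_eventually_le (a := C) ?_
    filter_upwards [eventually_ge_atTop 0] with x hx
    refine (hle x).trans_eq ?_
    rw [norm_real, Real.norm_of_nonneg hx, ofReal_re, mul_left_comm, ← Real.exp_add,
      neg_add_cancel, Real.exp_zero, mul_one]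
  have him : ∀ x : ℝ, ‖G (x * I)‖ ≤ M := fun x => by
    have hrot : I * (x * I) = (-x : ℝ) := by
      push_cast
      linear_combination (x : ℂ) * I_mul_I
    rw [hnorm, hrot]
    simpa using hreal (-x)
  have hGz := PhragmenLindelof.right_half_plane_of_bounded_on_real (z := -I * z)
    (Differentiable.diffContOnCl (by fun_prop)) ⟨1, one_lt_two, τ, hexp⟩ hre him (by simpa using hz)
  have hrot : I * (-I * z) = z := by linear_combination -z * I_mul_I
  rwa [hnorm, hrot, show (-I * z).re = z.im by simp, Real.exp_neg,
    inv_mul_le_iff₀' (Real.exp_pos _)] at hGz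

theorem IsBandlimited.of_norm_le_mul_exp_norm (hF : Differentiable ℂ F) (hτ : 0 ≤ τ)
    (hreal : ∀ x : ℝ, ‖F x‖ ≤ M) (hgrowth : ∀ z, ‖F z‖ ≤ C * Real.exp (τ * ‖z‖)) :
    IsBandlimited τ M F where
  differentiable := hF
  norm_le z := by
    rcases le_total 0 z.im with hz | hz
    · rw [abs_of_nonneg hz]
      exact norm_le_mul_exp_im_of_im_nonneg hF hτ hreal hgrowth hz
    · rw [abs_of_nonpos hz]
      simpa using norm_le_mul_exp_im_of_im_nonneg (F := fun w => F (-w)) (z := -z) (by fun_prop) hτ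
        (fun x => by simpa using hreal (-x)) (fun w => by simpa using hgrowth (-w))
        (by simpa using hz)

end HalfPlane

section TaylorEval

/-- The value at `a` of the holomorphic functional calculus of an entire function `F`, given by the
Taylor series of `F` at `0`. Unlike `cfc F`, it makes sense at every element of a Banach algebra
and depends holomorphically on `a`. -/
noncomputable def taylorEval {𝓐 : Type*} [NormedRing 𝓐] [NormedAlgebra ℂ 𝓐] (F : ℂ → ℂ) (a : 𝓐) :
    𝓐 :=
  ∑' n : ℕ, ((n ! : ℂ)⁻¹ * iteratedDeriv n F 0) • a ^ n

theorem taylorEval_eq_apply {F : ℂ → ℂ} (hF : Differentiable ℂ F) (z : ℂ) :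
    taylorEval F z = F z := by
  rw [← (hasSum_taylorSeries_of_entire hF 0 z).tsum_eq]
  exact tsum_congr fun n => by simp only [smul_eq_mul, sub_zero]; ring

theorem summable_mul_pow_div_factorial (M r : ℝ) : Summable fun n : ℕ => M * (r ^ n / n !) :=
  (Real.summable_pow_div_factorial r).mul_left M

namespace IsBandlimited

section BanachAlgebra

variable {𝓐 : Type*} [NormedRing 𝓐] [NormedAlgebra ℂ 𝓐] [NormOneClass 𝓐]
  {σ M : ℝ} {F : ℂ → ℂ} {a : 𝓐}

theorem norm_taylor_term_le (hF : IsBandlimited σ M F) (hσ : 0 ≤ σ) {r : ℝ} (ha : ‖a‖ ≤ r)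
    (n : ℕ) : ‖((n ! : ℂ)⁻¹ * iteratedDeriv n F 0) • a ^ n‖ ≤ M * ((σ * r) ^ n / n !) := by
  have hcoeff : ‖iteratedDeriv n F 0‖ ≤ σ ^ n * M := by
    simpa using (hF.iteratedDeriv hσ n).norm_ofReal_le 0
  have hM := hF.bound_nonneg
  calc ‖((n ! : ℂ)⁻¹ * iteratedDeriv n F 0) • a ^ n‖
      = (n ! : ℝ)⁻¹ * ‖iteratedDeriv n F 0‖ * ‖a ^ n‖ := by
        rw [norm_smul, norm_mul, norm_inv, norm_natCast]
    _ ≤ (n ! : ℝ)⁻¹ * (σ ^ n * M) * r ^ n := by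
        gcongr
        exact (norm_pow_le a n).trans (pow_le_pow_left₀ (norm_nonneg a) ha n)
    _ = M * ((σ * r) ^ n / n !) := by
        rw [mul_pow]
        ring

theorem norm_taylorEval_le (hF : IsBandlimited σ M F) (hσ : 0 ≤ σ) (a : 𝓐) :
    ‖taylorEval F a‖ ≤ M * Real.exp (σ * ‖a‖) := by
  rw [Real.exp_eq_exp_ℝ]
  exact tsum_of_norm_bounded ((NormedSpace.expSeries_div_hasSum_exp _).mul_left M)
    (hF.norm_taylor_term_le hσ le_rfl)

theorem differentiable_taylorEval_comp [CompleteSpace 𝓐] (hF : IsBandlimited σ M F) (hσ : 0 ≤ σ)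
    {u : ℂ → 𝓐} (hu : Differentiable ℂ u) : Differentiable ℂ fun z => taylorEval F (u z) := by
  intro z
  have hopen : IsOpen {w | ‖u w‖ < ‖u z‖ + 1} := isOpen_lt hu.continuous.norm continuous_const
  have hdiff : DifferentiableOn ℂ (fun w => taylorEval F (u w)) {w | ‖u w‖ < ‖u z‖ + 1} :=
    differentiableOn_tsum_of_summable_norm (summable_mul_pow_div_factorial M _)
      (fun n => by fun_prop) hopen fun n w hw => hF.norm_taylor_term_le hσ (le_of_lt hw) n
  exact hdiff.differentiableAt (hopen.mem_nhds (lt_add_one ‖u z‖))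

end BanachAlgebra

section CStarAlgebra

variable {𝓐 : Type*} [CStarAlgebra 𝓐] [Nontrivial 𝓐] {σ M : ℝ} {F : ℂ → ℂ} {a b : 𝓐}

theorem cfc_eq_taylorEval (hF : IsBandlimited σ M F) (hσ : 0 ≤ σ) [IsStarNormal a] :
    cfc F a = taylorEval F a := by
  set c : ℕ → ℂ := fun n => (n ! : ℂ)⁻¹ * iteratedDeriv n F 0
  have hsummable : Summable fun n => c n • a ^ n :=
    (summable_mul_pow_div_factorial M _).of_norm_bounded (hF.norm_taylor_term_le hσ le_rfl)
  have huniform : TendstoUniformlyOn (fun N z => ∑ n ∈ Finset.range N, c n * z ^ n) F atTop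
      (spectrum ℂ a) := by
    rw [show F = taylorEval F from funext fun z => (taylorEval_eq_apply hF.differentiable z).symm]
    exact tendstoUniformlyOn_tsum_nat (summable_mul_pow_div_factorial M _) fun n z hz =>
      hF.norm_taylor_term_le hσ (spectrum.norm_le_norm_of_mem hz) n
  have hpartial : ∀ N, cfc (fun z => ∑ n ∈ Finset.range N, c n * z ^ n) a =
      ∑ n ∈ Finset.range N, c n • a ^ n := fun N => by
    have hpow : ∀ n, cfc (fun z => c n * z ^ n) a = c n • a ^ n := fun n => by
      rw [cfc_const_mul _ _ _ (by fun_prop), cfc_pow_id a n]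
    simp only [← hpow]
    rw [← cfc_sum _ _ _ fun n _ => by fun_prop]
    simp only [Finset.sum_fn]
  have hlim := tendsto_cfc_fun huniform (.of_forall fun N => by fun_prop)
  simp only [hpartial] at hlim
  exact tendsto_nhds_unique hlim hsummable.hasSum.tendsto_sum_nat

theorem norm_taylorEval_le_of_isSelfAdjoint (hF : IsBandlimited σ M F) (hσ : 0 ≤ σ)
    (ha : IsSelfAdjoint a) : ‖taylorEval F a‖ ≤ M := by
  have := ha.isStarNormal
  rw [← hF.cfc_eq_taylorEval hσ]
  refine norm_cfc_le hF.bound_nonneg fun z hz => ?_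
  rw [ha.mem_spectrum_eq_re hz]
  exact hF.norm_ofReal_le z.re

theorem taylorEval_add_smul (hF : IsBandlimited σ M F) (hσ : 0 ≤ σ) (ha : IsSelfAdjoint a)
    (hb : IsSelfAdjoint b) :
    IsBandlimited (σ * ‖a‖) M fun z : ℂ => taylorEval F (b + z • a) := by
  have hM := hF.bound_nonneg
  refine of_norm_le_mul_exp_norm (C := M * Real.exp (σ * ‖b‖))
    (hF.differentiable_taylorEval_comp hσ (by fun_prop)) (by positivity) (fun x => ?_) fun z => ?_
  · refine hF.norm_taylorEval_le_of_isSelfAdjoint hσ (hb.add ?_)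
    rw [coe_smul]
    exact (IsSelfAdjoint.all x).smul ha
  · calc ‖taylorEval F (b + z • a)‖ ≤ M * Real.exp (σ * ‖b + z • a‖) :=
          hF.norm_taylorEval_le hσ _
      _ ≤ M * Real.exp (σ * (‖b‖ + ‖z‖ * ‖a‖)) := by
          gcongr
          exact norm_add_le_of_le le_rfl (norm_smul_le z a)
      _ = M * Real.exp (σ * ‖b‖) * Real.exp (σ * ‖a‖ * ‖z‖) := by
          rw [mul_assoc M, ← Real.exp_add]
          ring_nf

theorem norm_taylorEval_sub_le (hF : IsBandlimited σ M F) (hσ : 0 ≤ σ) (ha : IsSelfAdjoint a)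
    (hb : IsSelfAdjoint b) : ‖taylorEval F a - taylorEval F b‖ ≤ σ * M * ‖a - b‖ := by
  have hpath := hF.taylorEval_add_smul hσ (ha.sub hb) hb
  have hle := hpath.norm_sub_le (by positivity) 1 0
  simp only [ofReal_one, ofReal_zero, one_smul, zero_smul, add_sub_cancel, add_zero, sub_zero,
    abs_one, mul_one] at hle
  rwa [mul_right_comm]

end CStarAlgebra

end IsBandlimited

end TaylorEval

theorem operator_lipschitz_bandlimited_general {𝓐 : Type*} [CStarAlgebra 𝓐] {σ M : ℝ} (hσ : 0 ≤ σ)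
    {f : ℝ → ℂ} {F : ℂ → ℂ} (hF : Differentiable ℂ F)
    (hFbound : ∀ z : ℂ, ‖F z‖ ≤ M * Real.exp (σ * |z.im|)) (hfF : ∀ x : ℝ, f x = F x)
    {a b : 𝓐} (ha : IsSelfAdjoint a) (hb : IsSelfAdjoint b) :
    ‖cfc (fun z : ℂ => f z.re) a - cfc (fun z : ℂ => f z.re) b‖ ≤ σ * M * ‖a - b‖ := by
  nontriviality 𝓐
  have hband : IsBandlimited σ M F := ⟨hF, hFbound⟩
  have hcfc : ∀ {c : 𝓐}, IsSelfAdjoint c → cfc (fun z : ℂ => f z.re) c = taylorEval F c :=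
    fun hc => by
      have := hc.isStarNormal
      rw [← hband.cfc_eq_taylorEval hσ]
      exact cfc_congr fun z hz => by rw [hfF, ← hc.mem_spectrum_eq_re hz]
  rw [hcfc ha, hcfc hb]
  exact hband.norm_taylorEval_sub_le hσ ha hb

/-- `f : ℝ → ℂ` is bandlimited with parameters `(σ, M)`: it is the restriction to `ℝ`
of an entire function `F` with `|F z| ≤ M · exp(σ·|Im z|)`. For a bounded self-adjoint
operator `A`, `f(A)` is given by the continuous functional calculus; since the spectrum
of `A` is real, it is `cfc (fun z : ℂ => f z.re) A`. -/
theorem operator_lipschitz_bandlimited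
    {H : Type*} [NormedAddCommGroup H] [InnerProductSpace ℂ H] [CompleteSpace H]
    (σ M : ℝ) (hσ : 0 < σ) (hM : 0 < M)
    (f : ℝ → ℂ) (F : ℂ → ℂ) (hF : Differentiable ℂ F)
    (hFbound : ∀ z : ℂ, ‖F z‖ ≤ M * Real.exp (σ * |z.im|))
    (hfF : ∀ x : ℝ, f x = F x)
    (A B : H →L[ℂ] H) (hA : IsSelfAdjoint A) (hB : IsSelfAdjoint B) :
    ‖cfc (fun z : ℂ => f z.re) A - cfc (fun z : ℂ => f z.re) B‖ ≤ σ * M * ‖A - B‖ :=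
  operator_lipschitz_bandlimited_general hσ.le hF hFbound hfF hA hB
end

section
/- Let 0 < α < 1. There is an absolute constant c > 0 such that whenever f : ℝ → ℝ satisfies |f(x) − f(y)| ≤ C·|x − y|^α for all x, y ∈ ℝ, and A, B are bounded self-adjoint operators on a complex Hilbert space, then ‖f(A) − f(B)‖ ≤ c·(1 − α)^{−1}·C·‖A − B‖^α. In particular, every Hölder function of order α is operator Hölder of order α. -/
/-!
Let `P_γ` be convolution with the Cauchy density of scale `γ`, and `Q_γ = 2 P_γ - P_{2γ}`, whose
kernel is nonnegative and decays like `s⁻⁴`; hence `‖f - Q_γ f‖ ≤ 3 C γ ^ α` for `α`-Hölder `f`.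

The operator Bernstein inequality `‖(P_γ h)(A) - (P_γ h)(B)‖ ≤ ‖h‖ ‖A - B‖ / γ` comes from writing
`(P_γ h)(A)` as an integral of `h t` against `γ / π • ((A - t)² + γ²)⁻¹`. The resolvent identity and
AM-GM bound the difference of two such kernels by the positive kernels themselves, each of which
integrates to `1`.

The averages commute, so `Q_γ f - Q_{2γ} f = Q_γ (f - Q_{2γ} f) - Q_{2γ} (f - Q_γ f)`. By the two
bounds above, replacing `Q_γ f` by `Q_{2γ} f` at `γ = 2 ^ n ‖A - B‖` changes the difference of the
functions of `A` and `B` by `O(C ‖A - B‖ ^ α 2 ^ ((α - 1) n))`. Since that difference tends to `0`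
for `Q_γ f` as `n → ∞`, summing the geometric series gives the factor `(1 - α)⁻¹`.
-/

open MeasureTheory ProbabilityTheory Filter Topology
open scoped BoundedContinuousFunction InnerProductSpace NNReal Real

namespace OperatorHolder

section Interpolation

variable {R X E : Type*} [Semiring R] [SeminormedAddCommGroup X] [SeminormedAddCommGroup E]
  [Module R X] [Module R E]

lemma norm_map_sub_map_le_of_commute {L : X →ₗ[R] E} {P Q : Module.End R X} {p q : ℝ}
    (hPQ : Commute P Q) (hP : ∀ x, ‖L (P x)‖ ≤ p * ‖x‖) (hQ : ∀ x, ‖L (Q x)‖ ≤ q * ‖x‖) (x : X) :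
    ‖L (P x) - L (Q x)‖ ≤ p * ‖x - Q x‖ + q * ‖x - P x‖ := by
  -- Commutation turns the difference of two averages into averages of approximation errors.
  have h_split : P x - Q x = P (x - Q x) - Q (x - P x) := by
    have h_comm : P (Q x) = Q (P x) := LinearMap.congr_fun hPQ x
    rw [map_sub, map_sub, h_comm]
    abel
  rw [← map_sub, h_split, map_sub]
  exact norm_sub_le_of_le (hP _) (hQ _)

lemma norm_le_of_commute_of_norm_sub_le {L : X →ₗ[R] E} {Q : ℕ → Module.End R X} {K₀ K M r : ℝ}
    (hQ : ∀ n, Commute (Q n) (Q (n + 1))) (hK₀ : 0 ≤ K₀) (hK : 0 ≤ K) (hr : r < 2)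
    (hL : ∀ x, ‖L x‖ ≤ K₀ * ‖x‖) (hLQ : ∀ n x, ‖L (Q n x)‖ ≤ K / 2 ^ n * ‖x‖)
    {x : X} (hx : ∀ n, ‖x - Q n x‖ ≤ M * r ^ n) :
    ‖L x‖ ≤ K₀ * M + K * M * (2 * r + 1) / (2 - r) := by
  have h_initial : ‖L (x - Q 0 x)‖ ≤ K₀ * M :=
    (hL _).trans (mul_le_mul_of_nonneg_left (by simpa using hx 0) hK₀)
  have h_step (n : ℕ) : dist (L (Q n x)) (L (Q (n + 1) x)) ≤ K * M * (r + 1 / 2) * (r / 2) ^ n := by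
    calc dist (L (Q n x)) (L (Q (n + 1) x))
        ≤ K / 2 ^ n * ‖x - Q (n + 1) x‖ + K / 2 ^ (n + 1) * ‖x - Q n x‖ :=
          (dist_eq_norm _ _).trans_le
            (norm_map_sub_map_le_of_commute (hQ n) (hLQ n) (hLQ (n + 1)) x)
      _ ≤ K / 2 ^ n * (M * r ^ (n + 1)) + K / 2 ^ (n + 1) * (M * r ^ n) := by
          gcongr
          · exact hx (n + 1)
          · exact hx n
      _ = K * M * (r + 1 / 2) * (r / 2) ^ n := by
          rw [div_pow]
          field
  have h_limit : Tendsto (fun n ↦ L (Q n x)) atTop (𝓝 0) := by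
    refine squeeze_zero_norm (fun n ↦ hLQ n x) ?_
    have h_pow := tendsto_pow_atTop_nhds_zero_of_lt_one (r := (1 / 2 : ℝ)) (by norm_num)
      (by norm_num)
    simpa [div_eq_mul_inv] using (h_pow.const_mul K).mul_const ‖x‖
  have h_sum : ‖L (Q 0 x)‖ ≤ K * M * (r + 1 / 2) / (1 - r / 2) := by
    simpa using dist_le_of_le_geometric_of_tendsto₀ _ _ (by linarith) h_step h_limit
  calc ‖L x‖ = ‖L (x - Q 0 x) + L (Q 0 x)‖ := by rw [← map_add, sub_add_cancel]
    _ ≤ K₀ * M + K * M * (r + 1 / 2) / (1 - r / 2) := norm_add_le_of_le h_initial h_sum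
    _ = K₀ * M + K * M * (2 * r + 1) / (2 - r) := by
      have : 2 - r ≠ 0 := by linarith
      have : 1 - r / 2 ≠ 0 := by linarith
      field

end Interpolation

section TranslationAverage

variable {G E : Type*} [AddCommMonoid G] [TopologicalSpace G] [ContinuousAdd G]
  [SecondCountableTopology G] [MeasurableSpace G] [OpensMeasurableSpace G]
  [NormedAddCommGroup E]

lemma integrable_translate (μ : Measure G) [IsFiniteMeasure μ] (h : G →ᵇ E) (x : G) :
    Integrable (fun s ↦ h (x + s)) μ :=
  .of_bound (h.continuous.comp (by fun_prop)).aestronglyMeasurable ‖h‖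
    (.of_forall fun _ ↦ h.norm_coe_le_norm _)

variable [NormedSpace ℝ E]

lemma continuous_integral_translate (μ : Measure G) [IsFiniteMeasure μ] (h : G →ᵇ E) :
    Continuous fun x ↦ ∫ s, h (x + s) ∂μ :=
  continuous_of_dominated (bound := fun _ ↦ ‖h‖)
    (fun x ↦ (integrable_translate μ h x).aestronglyMeasurable)
    (fun _ ↦ .of_forall fun _ ↦ h.norm_coe_le_norm _) (integrable_const _)
    (.of_forall fun _ ↦ h.continuous.comp (by fun_prop))

/-- The operator `h ↦ (x ↦ ∫ s, h (x + s) ∂μ)` averaging the translates of a bounded continuous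
function against a finite measure: convolution with the reflection of `μ`. -/
noncomputable def translationAverage (μ : Measure G) [IsFiniteMeasure μ] :
    Module.End ℝ (G →ᵇ E) where
  toFun h := .ofNormedAddCommGroup (fun x ↦ ∫ s, h (x + s) ∂μ) (continuous_integral_translate μ h)
    (‖h‖ * μ.real Set.univ) fun _ ↦
      norm_integral_le_of_norm_le_const (.of_forall fun _ ↦ h.norm_coe_le_norm _)
  map_add' h g := by
    ext x
    exact integral_add (integrable_translate μ h x) (integrable_translate μ g x)
  map_smul' c h := by
    ext x
    exact integral_smul c _

lemma translationAverage_apply (μ : Measure G) [IsFiniteMeasure μ] (h : G →ᵇ E) (x : G) :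
    translationAverage μ h x = ∫ s, h (x + s) ∂μ := rfl

lemma commute_translationAverage (μ ν : Measure G) [IsFiniteMeasure μ] [IsFiniteMeasure ν] :
    Commute (translationAverage μ : Module.End ℝ (G →ᵇ E)) (translationAverage ν) := by
  refine LinearMap.ext fun h ↦ BoundedContinuousFunction.ext fun x ↦ ?_
  have h_int : Integrable (fun z : G × G ↦ h (x + z.1 + z.2)) (μ.prod ν) :=
    .of_bound (h.continuous.comp (by fun_prop)).aestronglyMeasurable ‖h‖
      (.of_forall fun _ ↦ h.norm_coe_le_norm _)
  simp only [Module.End.mul_apply, translationAverage_apply]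
  rw [integral_integral_swap h_int]
  simp only [add_right_comm x]

end TranslationAverage

section Poisson

variable {γ : ℝ≥0}

lemma continuous_inv_sq_add_sq (hγ : γ ≠ 0) : Continuous fun x : ℝ ↦ (x ^ 2 + (γ : ℝ) ^ 2)⁻¹ :=
  Continuous.inv₀ (by fun_prop) fun _ ↦ by positivity

lemma continuous_uncurry_cauchyPDFReal (hγ : γ ≠ 0) :
    Continuous (Function.uncurry fun t x ↦ cauchyPDFReal t γ x) := by
  simp only [Function.uncurry_def, cauchyPDFReal_def]
  exact continuous_const.mul ((continuous_inv_sq_add_sq hγ).comp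
    (by fun_prop : Continuous fun z : ℝ × ℝ ↦ z.2 - z.1))

lemma integral_cauchyMeasure {E : Type*} [NormedAddCommGroup E] [NormedSpace ℝ E]
    (x₀ : ℝ) (hγ : γ ≠ 0) (g : ℝ → E) :
    ∫ s, g s ∂cauchyMeasure x₀ γ = ∫ s, cauchyPDFReal x₀ γ s • g s := by
  rw [cauchyMeasure_of_scale_ne_zero x₀ hγ,
    integral_withDensity_eq_integral_toReal_smul (measurable_cauchyPDF x₀ γ)
      (.of_forall fun _ ↦ ENNReal.ofReal_lt_top)]
  simp only [cauchyPDF, ENNReal.toReal_ofReal (cauchyPDF_pos x₀ hγ _).le]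

/-- Convolution with the Cauchy density of scale `γ`, that is, the Poisson extension to the upper
half-plane restricted to height `γ`. For `γ = 0` the Cauchy measure is a Dirac mass and this is the
identity. -/
noncomputable def poissonAverage (γ : ℝ≥0) : Module.End ℝ (ℝ →ᵇ ℝ) :=
  translationAverage (cauchyMeasure 0 γ)

lemma poissonAverage_apply (hγ : γ ≠ 0) (h : ℝ →ᵇ ℝ) (x : ℝ) :
    poissonAverage γ h x = ∫ t, h t * cauchyPDFReal t γ x := by
  rw [poissonAverage, translationAverage_apply, integral_cauchyMeasure 0 hγ,
    ← integral_add_left_eq_self (fun t ↦ h t * cauchyPDFReal t γ x) x]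
  simp only [cauchyPDFReal_def, smul_eq_mul, sub_zero, sub_add_cancel_left, neg_sq, mul_comm]

lemma commute_poissonAverage (γ γ' : ℝ≥0) :
    Commute (poissonAverage γ) (poissonAverage γ') :=
  commute_translationAverage _ _

/-- The combination `2 P_γ - P_{2γ}` of Poisson averages in which the `s⁻²` tails of the kernels
cancel, so that the `|s| ^ α`-moment of its kernel stays bounded as `α → 1`. -/
noncomputable def extrapolatedPoissonAverage (γ : ℝ≥0) : Module.End ℝ (ℝ →ᵇ ℝ) :=
  2 • poissonAverage γ - poissonAverage (2 * γ)

lemma extrapolatedPoissonAverage_apply (γ : ℝ≥0) (h : ℝ →ᵇ ℝ) :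
    extrapolatedPoissonAverage γ h = 2 • poissonAverage γ h - poissonAverage (2 * γ) h := rfl

lemma commute_extrapolatedPoissonAverage (γ γ' : ℝ≥0) :
    Commute (extrapolatedPoissonAverage γ) (extrapolatedPoissonAverage γ') := by
  have h_right (β : ℝ≥0) : Commute (poissonAverage β) (extrapolatedPoissonAverage γ') :=
    Commute.sub_right (R := Module.End ℝ (ℝ →ᵇ ℝ))
      (Commute.smul_right (commute_poissonAverage β γ') 2) (commute_poissonAverage β (2 * γ'))
  exact Commute.sub_left (R := Module.End ℝ (ℝ →ᵇ ℝ)) (Commute.smul_left (h_right γ) 2)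
    (h_right (2 * γ))

lemma two_mul_cauchyPDFReal_sub_mul (hγ : γ ≠ 0) (s : ℝ) :
    (2 * cauchyPDFReal 0 γ s - cauchyPDFReal 0 (2 * γ) s) * (1 + (s / γ) ^ 2) =
      3 * cauchyPDFReal 0 (2 * γ) s := by
  simp only [cauchyPDFReal_def, sub_zero, NNReal.coe_mul, NNReal.coe_ofNat]
  field_simp
  ring

lemma two_mul_cauchyPDFReal_sub_nonneg (hγ : γ ≠ 0) (s : ℝ) :
    0 ≤ 2 * cauchyPDFReal 0 γ s - cauchyPDFReal 0 (2 * γ) s := by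
  have h_pos := cauchyPDF_pos 0 (mul_ne_zero two_ne_zero hγ) s
  refine nonneg_of_mul_nonneg_left ?_ (by positivity : 0 < 1 + (s / γ) ^ 2)
  rw [two_mul_cauchyPDFReal_sub_mul hγ]
  positivity

lemma rpow_le_one_add_sq {u α : ℝ} (hu : 0 ≤ u) (h0 : 0 ≤ α) (h2 : α ≤ 2) :
    u ^ α ≤ 1 + u ^ 2 := by
  rcases le_total u 1 with h | h
  · linarith [Real.rpow_le_one hu h h0, sq_nonneg u]
  · calc u ^ α ≤ u ^ (2 : ℝ) := Real.rpow_le_rpow_of_exponent_le h h2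
      _ ≤ 1 + u ^ 2 := by rw [Real.rpow_two]; linarith

lemma abs_rpow_le_mul_one_add_div_sq {α : ℝ} (hγ : γ ≠ 0) (h0 : 0 ≤ α) (h2 : α ≤ 2) (s : ℝ) :
    |s| ^ α ≤ γ ^ α * (1 + (s / γ) ^ 2) := by
  calc |s| ^ α = γ ^ α * (|s| / γ) ^ α := by
        rw [← Real.mul_rpow γ.coe_nonneg (by positivity), mul_div_cancel₀ _ (by positivity)]
    _ ≤ γ ^ α * (1 + (s / γ) ^ 2) := by
        gcongr
        simpa [div_pow] using rpow_le_one_add_sq (u := |s| / γ) (by positivity) h0 h2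

lemma sub_extrapolatedPoissonAverage_apply (hγ : γ ≠ 0) (f : ℝ →ᵇ ℝ) (x : ℝ) :
    (f - extrapolatedPoissonAverage γ f) x =
      ∫ s, (2 * cauchyPDFReal 0 γ s - cauchyPDFReal 0 (2 * γ) s) * (f x - f (x + s)) := by
  have h_poisson {β : ℝ≥0} (hβ : β ≠ 0) :
      f x - poissonAverage β f x = ∫ s, cauchyPDFReal 0 β s * (f x - f (x + s)) := by
    simp only [poissonAverage, translationAverage_apply, ← smul_eq_mul,
      ← integral_cauchyMeasure 0 hβ]
    rw [integral_sub (integrable_const _) (integrable_translate _ f x)]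
    simp
  have h_int (β : ℝ≥0) : Integrable fun s ↦ cauchyPDFReal 0 β s * (f x - f (x + s)) :=
    (integrable_cauchyPDFReal 0).mul_bdd (c := ‖f‖ + ‖f‖)
      (continuous_const.sub (f.continuous.comp (by fun_prop))).aestronglyMeasurable
      (.of_forall fun _ ↦ norm_sub_le_of_le (f.norm_coe_le_norm _) (f.norm_coe_le_norm _))
  have h2γ : 2 * γ ≠ 0 := mul_ne_zero two_ne_zero hγ
  calc (f - extrapolatedPoissonAverage γ f) x
      = 2 * (f x - poissonAverage γ f x) - (f x - poissonAverage (2 * γ) f x) := by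
        rw [extrapolatedPoissonAverage_apply, two_nsmul, BoundedContinuousFunction.sub_apply,
          BoundedContinuousFunction.sub_apply, BoundedContinuousFunction.add_apply]
        ring
    _ = _ := by
        rw [h_poisson hγ, h_poisson h2γ, ← integral_const_mul,
          ← integral_sub ((h_int _).const_mul 2) (h_int _)]
        simp only [sub_mul, mul_assoc]

lemma norm_sub_extrapolatedPoissonAverage_le (hγ : γ ≠ 0) {f : ℝ →ᵇ ℝ} {C α : ℝ≥0}
    (hf : HolderWith C α f) (hα : α ≤ 2) :
    ‖f - extrapolatedPoissonAverage γ f‖ ≤ 3 * (C * γ ^ (α : ℝ)) := by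
  refine (BoundedContinuousFunction.norm_le (by positivity)).2 fun x ↦ ?_
  have h_bound (s : ℝ) :
      ‖(2 * cauchyPDFReal 0 γ s - cauchyPDFReal 0 (2 * γ) s) * (f x - f (x + s))‖ ≤
        3 * cauchyPDFReal 0 (2 * γ) s * (C * γ ^ (α : ℝ)) := by
    have h_holder : ‖f x - f (x + s)‖ ≤ C * |s| ^ (α : ℝ) := by
      simpa [dist_eq_norm] using hf.dist_le x (x + s)
    have h_rpow := abs_rpow_le_mul_one_add_div_sq hγ α.coe_nonneg hα s
    have h_nonneg := two_mul_cauchyPDFReal_sub_nonneg hγ s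
    calc ‖(2 * cauchyPDFReal 0 γ s - cauchyPDFReal 0 (2 * γ) s) * (f x - f (x + s))‖
        ≤ (2 * cauchyPDFReal 0 γ s - cauchyPDFReal 0 (2 * γ) s) *
            (C * (γ ^ (α : ℝ) * (1 + (s / γ) ^ 2))) := by
          rw [norm_mul, Real.norm_of_nonneg h_nonneg]
          gcongr
          exact h_holder.trans (by gcongr)
      _ = 3 * cauchyPDFReal 0 (2 * γ) s * (C * γ ^ (α : ℝ)) := by
          rw [← two_mul_cauchyPDFReal_sub_mul hγ]
          ring
  rw [sub_extrapolatedPoissonAverage_apply hγ]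
  refine (norm_integral_le_of_norm_le
    (((integrable_cauchyPDFReal 0).const_mul 3).mul_const _) (.of_forall h_bound)).trans_eq ?_
  rw [integral_mul_const, integral_const_mul,
    integral_cauchyPDFReal_eq_one 0 (mul_ne_zero two_ne_zero hγ), mul_one]

lemma cauchyPDFReal_le_mul_of_abs_le (hγ : γ ≠ 0) {r x : ℝ} (hx : |x| ≤ r) (t : ℝ) :
    cauchyPDFReal t γ x ≤ (2 + 2 * r ^ 2 / γ ^ 2) * cauchyPDFReal 0 γ t := by
  have h_sq : x ^ 2 ≤ r ^ 2 := sq_le_sq' (abs_le.1 hx).1 (abs_le.1 hx).2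
  have h_den : t ^ 2 + γ ^ 2 ≤ (2 + 2 * r ^ 2 / γ ^ 2) * ((x - t) ^ 2 + γ ^ 2) := by
    calc t ^ 2 + γ ^ 2 ≤ 2 * (x - t) ^ 2 + 2 * r ^ 2 + 2 * γ ^ 2 := by
          nlinarith [sq_nonneg (2 * x - t), sq_nonneg (γ : ℝ)]
      _ ≤ 2 * (x - t) ^ 2 + 2 * r ^ 2 + 2 * γ ^ 2 + 2 * r ^ 2 / γ ^ 2 * (x - t) ^ 2 :=
          le_add_of_nonneg_right (by positivity)
      _ = (2 + 2 * r ^ 2 / γ ^ 2) * ((x - t) ^ 2 + γ ^ 2) := by field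
  simp only [cauchyPDFReal_def, sub_zero]
  rw [mul_left_comm]
  gcongr
  rw [← div_eq_mul_inv, inv_le_comm₀ (by positivity) (by positivity), inv_div,
    div_le_iff₀ (by positivity), mul_comm]
  exact h_den

lemma norm_mul_cauchyPDFReal_le_of_mem_spectrum {𝒜 : Type*} [NormedRing 𝒜] [NormedAlgebra ℝ 𝒜]
    [CompleteSpace 𝒜] (hγ : γ ≠ 0) (h : ℝ →ᵇ ℝ) {A : 𝒜} {x : ℝ} (hx : x ∈ spectrum ℝ A) (t : ℝ) :
    ‖h t * cauchyPDFReal t γ x‖ ≤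
      ‖h‖ * ((2 + 2 * (‖A‖ * ‖(1 : 𝒜)‖) ^ 2 / γ ^ 2) * cauchyPDFReal 0 γ t) := by
  rw [norm_mul, Real.norm_of_nonneg (cauchyPDF_pos t hγ x).le]
  exact mul_le_mul (h.norm_coe_le_norm t)
    (cauchyPDFReal_le_mul_of_abs_le hγ (spectrum.norm_le_norm_mul_of_mem hx) t)
    (cauchyPDF_pos t hγ x).le (norm_nonneg h)

end Poisson

section Resolvent

variable {R : Type*} [Ring R]

lemma sub_eq_of_mul_eq_one_of_mul_eq_one {a b X Y c : R} (ha : a * (X * X + c) = 1)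
    (hb : (Y * Y + c) * b = 1) :
    a - b = a * (Y - X) * (Y * b) + a * X * (Y - X) * b := by
  calc a - b = a * ((Y * Y + c) * b) - a * (X * X + c) * b := by rw [ha, hb, mul_one, one_mul]
    _ = a * (Y - X) * (Y * b) + a * X * (Y - X) * b := by noncomm_ring

variable {H : Type*} [NormedAddCommGroup H] [InnerProductSpace ℂ H] [CompleteSpace H]

lemma re_inner_eq_of_mul_eq_one {X a : H →L[ℂ] H} {y : ℝ} (hX : IsSelfAdjoint X)
    (ha : (X * X + algebraMap ℝ _ (y ^ 2)) * a = 1) (u : H) :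
    (⟪a u, u⟫_ℂ).re = ‖X (a u)‖ ^ 2 + (y * ‖a u‖) ^ 2 := by
  have h_apply : u = X (X (a u)) + y ^ 2 • a u := by
    simpa [Algebra.algebraMap_eq_smul_one] using (DFunLike.congr_fun ha u).symm
  have h_symm : ⟪a u, X (X (a u))⟫_ℂ = ⟪X (a u), X (a u)⟫_ℂ := (hX.isSymmetric _ _).symm
  calc (⟪a u, u⟫_ℂ).re = (⟪a u, X (X (a u)) + y ^ 2 • a u⟫_ℂ).re := by rw [← h_apply]
    _ = ‖X (a u)‖ ^ 2 + (y * ‖a u‖) ^ 2 := by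
      rw [inner_add_right, h_symm, inner_self_eq_norm_sq_to_K, ← Complex.coe_smul,
        inner_smul_right, inner_self_eq_norm_sq_to_K, mul_pow]
      simp only [Complex.coe_algebraMap, ← Complex.ofReal_pow, ← Complex.ofReal_mul,
        ← Complex.ofReal_add, Complex.ofReal_re]

lemma mul_norm_inner_sub_le {X Y a b : H →L[ℂ] H} {y : ℝ} (hy : 0 ≤ y)
    (hX : IsSelfAdjoint X) (hY : IsSelfAdjoint Y) (ha : IsSelfAdjoint a)
    (hXa : (X * X + algebraMap ℝ _ (y ^ 2)) * a = 1)
    (hYb : (Y * Y + algebraMap ℝ _ (y ^ 2)) * b = 1) (u v : H) :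
    y * ‖⟪(a - b) u, v⟫_ℂ‖ ≤ ‖X - Y‖ / 2 * ((⟪b u, u⟫_ℂ).re + (⟪a v, v⟫_ℂ).re) := by
  have hXa' : a * (X * X + algebraMap ℝ _ (y ^ 2)) = 1 := by
    have h_scalar : IsSelfAdjoint (algebraMap ℝ (H →L[ℂ] H) (y ^ 2)) := .algebraMap _ (.all _)
    simpa only [star_mul, star_add, star_one, ha.star_eq, hX.star_eq, h_scalar.star_eq]
      using congrArg star hXa
  have h_inner : ⟪(a - b) u, v⟫_ℂ =
      ⟪(Y - X) (Y (b u)), a v⟫_ℂ + ⟪(Y - X) (b u), X (a v)⟫_ℂ := by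
    rw [sub_eq_of_mul_eq_one_of_mul_eq_one hXa' hYb]
    simp only [add_apply, mul_apply_eq_comp, inner_add_left]
    exact congrArg₂ _ (ha.isSymmetric _ _) ((ha.isSymmetric _ _).trans (hX.isSymmetric _ _))
  have h_bound (w z : H) : ‖⟪(Y - X) w, z⟫_ℂ‖ ≤ ‖X - Y‖ * (‖w‖ * ‖z‖) := by
    rw [norm_sub_rev X Y, ← mul_assoc]
    exact (norm_inner_le_norm _ _).trans (by gcongr; exact (Y - X).le_opNorm w)
  rw [re_inner_eq_of_mul_eq_one hX hXa, re_inner_eq_of_mul_eq_one hY hYb, h_inner]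
  calc y * ‖⟪(Y - X) (Y (b u)), a v⟫_ℂ + ⟪(Y - X) (b u), X (a v)⟫_ℂ‖
      ≤ y * (‖X - Y‖ * (‖Y (b u)‖ * ‖a v‖) + ‖X - Y‖ * (‖b u‖ * ‖X (a v)‖)) := by
        gcongr
        exact norm_add_le_of_le (h_bound _ _) (h_bound _ _)
    _ = ‖X - Y‖ / 2 *
          (2 * ‖Y (b u)‖ * (y * ‖a v‖) + 2 * (y * ‖b u‖) * ‖X (a v)‖) := by ring
    _ ≤ ‖X - Y‖ / 2 * ((‖Y (b u)‖ ^ 2 + (y * ‖a v‖) ^ 2) +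
          ((y * ‖b u‖) ^ 2 + ‖X (a v)‖ ^ 2)) := by
        gcongr <;> exact two_mul_le_add_sq _ _
    _ = _ := by ring

end Resolvent

section CFC

variable {𝒜 : Type*} [NormedRing 𝒜] [StarRing 𝒜] [NormedAlgebra ℝ 𝒜]
  [IsometricContinuousFunctionalCalculus ℝ 𝒜 IsSelfAdjoint]

/-- The map `h ↦ h(A) - h(B)` on bounded continuous functions, whose norm on Hölder functions is to
be estimated. -/
noncomputable def cfcSub (A B : 𝒜) : (ℝ →ᵇ ℝ) →ₗ[ℝ] 𝒜 where
  toFun h := cfc h A - cfc h B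
  map_add' h g := by
    have h_add (T : 𝒜) : cfc (⇑(h + g)) T = cfc h T + cfc g T :=
      cfc_add T h g h.continuous.continuousOn g.continuous.continuousOn
    rw [h_add, h_add]
    abel
  map_smul' c h := by
    have h_smul (T : 𝒜) : cfc (⇑(c • h)) T = c • cfc h T :=
      cfc_smul c h T h.continuous.continuousOn
    rw [h_smul, h_smul, ← smul_sub, RingHom.id_apply]

lemma cfcSub_apply (A B : 𝒜) (h : ℝ →ᵇ ℝ) : cfcSub A B h = cfc h A - cfc h B := rfl

lemma norm_cfcSub_le (A B : 𝒜) (h : ℝ →ᵇ ℝ) : ‖cfcSub A B h‖ ≤ 2 * ‖h‖ := by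
  have h_norm (T : 𝒜) : ‖cfc h T‖ ≤ ‖h‖ :=
    norm_cfc_le (norm_nonneg h) fun x _ ↦ h.norm_coe_le_norm x
  rw [cfcSub_apply, two_mul]
  exact norm_sub_le_of_le (h_norm A) (h_norm B)

variable {γ : ℝ≥0}

lemma cfc_mul_cauchyPDFReal (hγ : γ ≠ 0) (c t : ℝ) (A : 𝒜) :
    cfc (fun x ↦ c * cauchyPDFReal t γ x) A = c • cfc (cauchyPDFReal t γ) A :=
  cfc_const_mul c _ A ((continuous_uncurry_cauchyPDFReal hγ).comp (by fun_prop :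
    Continuous fun x : ℝ ↦ (t, x))).continuousOn

lemma mul_cfc_inv_sq_add_sq (hγ : γ ≠ 0) {X : 𝒜} (hX : IsSelfAdjoint X) :
    (X * X + algebraMap ℝ 𝒜 (γ ^ 2)) * cfc (fun x ↦ (x ^ 2 + (γ : ℝ) ^ 2)⁻¹) X = 1 := by
  have h_poly : X * X + algebraMap ℝ 𝒜 (γ ^ 2) = cfc (fun x ↦ x ^ 2 + (γ : ℝ) ^ 2) X := by
    rw [cfc_add_const _ _ X, cfc_pow_id X, sq X]
  rw [h_poly, ← cfc_mul _ _ X (by fun_prop) (continuous_inv_sq_add_sq hγ).continuousOn,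
    ← cfc_one ℝ X]
  exact cfc_congr fun x _ ↦ mul_inv_cancel₀ (by positivity)

lemma cfc_cauchyPDFReal (hγ : γ ≠ 0) (t : ℝ) {A : 𝒜} (hA : IsSelfAdjoint A) :
    cfc (cauchyPDFReal t γ) A =
      (π⁻¹ * γ) • cfc (fun x ↦ (x ^ 2 + (γ : ℝ) ^ 2)⁻¹) (A - algebraMap ℝ 𝒜 t) := by
  have h_shift : A - algebraMap ℝ 𝒜 t = cfc (fun x ↦ x - t) A := by
    rw [cfc_sub (fun x ↦ x) (fun _ ↦ t) A, cfc_id' ℝ A, cfc_const t A]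
  have h_cont := continuous_inv_sq_add_sq hγ
  rw [h_shift, ← cfc_comp' _ (fun x ↦ x - t) A h_cont.continuousOn,
    ← cfc_const_mul _ (fun x ↦ ((x - t) ^ 2 + (γ : ℝ) ^ 2)⁻¹) A
      (h_cont.comp (continuous_sub_right t)).continuousOn]
  rfl

variable [CompleteSpace 𝒜]

lemma integrable_smul_cfc_cauchyPDFReal (hγ : γ ≠ 0) (h : ℝ →ᵇ ℝ) {A : 𝒜}
    (hA : IsSelfAdjoint A) : Integrable fun t ↦ h t • cfc (cauchyPDFReal t γ) A := by
  simp only [← cfc_mul_cauchyPDFReal hγ]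
  exact integrable_cfc _ _ A
    ((h.continuous.comp continuous_fst).mul (continuous_uncurry_cauchyPDFReal hγ)).continuousOn
    (.of_forall fun t x hx ↦ norm_mul_cauchyPDFReal_le_of_mem_spectrum hγ h hx t)
    (((integrable_cauchyPDFReal 0).const_mul _).const_mul _).hasFiniteIntegral

lemma cfc_poissonAverage (hγ : γ ≠ 0) (h : ℝ →ᵇ ℝ) {A : 𝒜} (hA : IsSelfAdjoint A) :
    cfc (poissonAverage γ h) A = ∫ t, h t • cfc (cauchyPDFReal t γ) A := by
  simp only [← cfc_mul_cauchyPDFReal hγ, funext (poissonAverage_apply hγ h)]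
  exact cfc_integral _ _ A
    ((h.continuous.comp continuous_fst).mul (continuous_uncurry_cauchyPDFReal hγ)).continuousOn
    (.of_forall fun t x hx ↦ norm_mul_cauchyPDFReal_le_of_mem_spectrum hγ h hx t)
    (((integrable_cauchyPDFReal 0).const_mul _).const_mul _).hasFiniteIntegral

lemma integrable_cfc_cauchyPDFReal (hγ : γ ≠ 0) {A : 𝒜} (hA : IsSelfAdjoint A) :
    Integrable fun t ↦ cfc (cauchyPDFReal t γ) A := by
  simpa using integrable_smul_cfc_cauchyPDFReal hγ 1 hA

lemma integral_cfc_cauchyPDFReal (hγ : γ ≠ 0) {A : 𝒜} (hA : IsSelfAdjoint A) :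
    ∫ t, cfc (cauchyPDFReal t γ) A = 1 := by
  have h_one : ⇑(poissonAverage γ 1) = 1 := by
    ext x
    simp [poissonAverage, translationAverage_apply]
  rw [← cfc_one ℝ A, ← h_one, cfc_poissonAverage hγ 1 hA]
  simp

lemma integrable_smul_cfc_cauchyPDFReal_sub (hγ : γ ≠ 0) (h : ℝ →ᵇ ℝ) {A B : 𝒜}
    (hA : IsSelfAdjoint A) (hB : IsSelfAdjoint B) :
    Integrable fun t ↦ h t • (cfc (cauchyPDFReal t γ) A - cfc (cauchyPDFReal t γ) B) := by
  simp only [smul_sub]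
  exact (integrable_smul_cfc_cauchyPDFReal hγ h hA).sub
    (integrable_smul_cfc_cauchyPDFReal hγ h hB)

lemma cfcSub_poissonAverage (hγ : γ ≠ 0) (h : ℝ →ᵇ ℝ) {A B : 𝒜} (hA : IsSelfAdjoint A)
    (hB : IsSelfAdjoint B) :
    cfcSub A B (poissonAverage γ h) =
      ∫ t, h t • (cfc (cauchyPDFReal t γ) A - cfc (cauchyPDFReal t γ) B) := by
  rw [cfcSub_apply, cfc_poissonAverage hγ h hA, cfc_poissonAverage hγ h hB,
    ← integral_sub (integrable_smul_cfc_cauchyPDFReal hγ h hA)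
      (integrable_smul_cfc_cauchyPDFReal hγ h hB)]
  simp only [smul_sub]

end CFC

section Bernstein

lemma integral_inner_apply {Ω 𝕜 E : Type*} [MeasurableSpace Ω] {μ : Measure Ω} [RCLike 𝕜]
    [NormedAddCommGroup E] [InnerProductSpace 𝕜 E] [NormedSpace ℝ E] [CompleteSpace E]
    {F : Ω → E →L[𝕜] E} (hF : Integrable F μ) (u v : E) :
    ∫ t, ⟪F t u, v⟫_𝕜 ∂μ = ⟪(∫ t, F t ∂μ) u, v⟫_𝕜 := by
  simp only [← inner_conj_symm _ v]
  rw [integral_conj, integral_inner (hF.apply_continuousLinearMap u),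
    ContinuousLinearMap.integral_apply hF]

variable {H : Type*} [NormedAddCommGroup H] [InnerProductSpace ℂ H] [CompleteSpace H]
  {γ : ℝ≥0} {A B : H →L[ℂ] H}

lemma norm_inner_cfc_cauchyPDFReal_sub_le (hγ : γ ≠ 0) (hA : IsSelfAdjoint A)
    (hB : IsSelfAdjoint B) (t : ℝ) (u v : H) :
    ‖⟪(cfc (cauchyPDFReal t γ) A - cfc (cauchyPDFReal t γ) B) u, v⟫_ℂ‖ ≤
      ‖A - B‖ / (2 * γ) * ((⟪cfc (cauchyPDFReal t γ) B u, u⟫_ℂ).re +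
        (⟪cfc (cauchyPDFReal t γ) A v, v⟫_ℂ).re) := by
  have h_shift {T : H →L[ℂ] H} (hT : IsSelfAdjoint T) : IsSelfAdjoint (T - algebraMap ℝ _ t) :=
    hT.sub (.algebraMap _ (.all t))
  have h_resolvent := mul_norm_inner_sub_le γ.coe_nonneg (h_shift hA) (h_shift hB)
    (cfc_predicate _ _) (mul_cfc_inv_sq_add_sq hγ (h_shift hA))
    (mul_cfc_inv_sq_add_sq hγ (h_shift hB)) u v
  rw [sub_sub_sub_cancel_right, mul_comm, ← le_div_iff₀ (by positivity)] at h_resolvent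
  rw [cfc_cauchyPDFReal hγ t hA, cfc_cauchyPDFReal hγ t hB, ← smul_sub]
  simp only [← Complex.coe_smul, smul_apply, inner_smul_left, Complex.conj_ofReal,
    Complex.re_ofReal_mul, norm_mul, Complex.norm_real,
    Real.norm_of_nonneg (by positivity : 0 ≤ π⁻¹ * γ)]
  refine (mul_le_mul_of_nonneg_left h_resolvent (by positivity)).trans_eq ?_
  field

lemma integrable_re_inner_cfc_cauchyPDFReal (hγ : γ ≠ 0) (hA : IsSelfAdjoint A) (u : H) :
    Integrable fun t ↦ (⟪cfc (cauchyPDFReal t γ) A u, u⟫_ℂ).re :=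
  (((integrable_cfc_cauchyPDFReal hγ hA).apply_continuousLinearMap u).inner_const (𝕜 := ℂ) u).re

lemma integral_re_inner_cfc_cauchyPDFReal (hγ : γ ≠ 0) (hA : IsSelfAdjoint A) (u : H) :
    ∫ t, (⟪cfc (cauchyPDFReal t γ) A u, u⟫_ℂ).re = ‖u‖ ^ 2 := by
  have h_int := integrable_cfc_cauchyPDFReal hγ hA
  refine (integral_re ((h_int.apply_continuousLinearMap u).inner_const (𝕜 := ℂ) u)).trans ?_
  rw [integral_inner_apply h_int, integral_cfc_cauchyPDFReal hγ hA, one_apply_eq_self]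
  exact inner_self_eq_norm_sq u

lemma norm_cfcSub_poissonAverage_le (hγ : γ ≠ 0) (h : ℝ →ᵇ ℝ) (hA : IsSelfAdjoint A)
    (hB : IsSelfAdjoint B) :
    ‖cfcSub A B (poissonAverage γ h)‖ ≤ ‖A - B‖ / γ * ‖h‖ := by
  have h_massA := integrable_re_inner_cfc_cauchyPDFReal hγ hA
  have h_massB := integrable_re_inner_cfc_cauchyPDFReal hγ hB
  refine ContinuousLinearMap.opNorm_le_of_re_inner_le (by positivity) fun u v hu hv ↦ ?_
  have h_pointwise (t : ℝ) :
      ‖⟪(h t • (cfc (cauchyPDFReal t γ) A - cfc (cauchyPDFReal t γ) B)) u, v⟫_ℂ‖ ≤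
        ‖h‖ * (‖A - B‖ / (2 * γ) * ((⟪cfc (cauchyPDFReal t γ) B u, u⟫_ℂ).re +
          (⟪cfc (cauchyPDFReal t γ) A v, v⟫_ℂ).re)) := by
    rw [← Complex.coe_smul, smul_apply, inner_smul_left, norm_mul, RCLike.norm_conj,
      Complex.norm_real]
    exact mul_le_mul (h.norm_coe_le_norm t)
      (norm_inner_cfc_cauchyPDFReal_sub_le hγ hA hB t u v) (norm_nonneg _) (norm_nonneg _)
  calc (⟪cfcSub A B (poissonAverage γ h) u, v⟫_ℂ).re
      ≤ ‖⟪cfcSub A B (poissonAverage γ h) u, v⟫_ℂ‖ := Complex.re_le_norm _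
    _ = ‖∫ t, ⟪(h t • (cfc (cauchyPDFReal t γ) A - cfc (cauchyPDFReal t γ) B)) u, v⟫_ℂ‖ := by
        rw [integral_inner_apply (integrable_smul_cfc_cauchyPDFReal_sub hγ h hA hB),
          cfcSub_poissonAverage hγ h hA hB]
    _ ≤ ∫ t, ‖h‖ * (‖A - B‖ / (2 * γ) * ((⟪cfc (cauchyPDFReal t γ) B u, u⟫_ℂ).re +
          (⟪cfc (cauchyPDFReal t γ) A v, v⟫_ℂ).re)) :=
        norm_integral_le_of_norm_le ((((h_massB u).add (h_massA v)).const_mul _).const_mul _)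
          (.of_forall h_pointwise)
    _ = ‖A - B‖ / γ * ‖h‖ := by
        rw [integral_const_mul, integral_const_mul, integral_add (h_massB u) (h_massA v),
          integral_re_inner_cfc_cauchyPDFReal hγ hA, integral_re_inner_cfc_cauchyPDFReal hγ hB,
          hu, hv]
        field

lemma norm_cfcSub_extrapolatedPoissonAverage_le (hγ : γ ≠ 0) (h : ℝ →ᵇ ℝ)
    (hA : IsSelfAdjoint A) (hB : IsSelfAdjoint B) :
    ‖cfcSub A B (extrapolatedPoissonAverage γ h)‖ ≤ 5 / 2 * (‖A - B‖ / γ) * ‖h‖ := by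
  have h_single := norm_cfcSub_poissonAverage_le hγ h hA hB
  have h_double := norm_cfcSub_poissonAverage_le (mul_ne_zero two_ne_zero hγ) h hA hB
  calc ‖cfcSub A B (extrapolatedPoissonAverage γ h)‖
      = ‖2 • cfcSub A B (poissonAverage γ h) - cfcSub A B (poissonAverage (2 * γ) h)‖ := by
        rw [extrapolatedPoissonAverage_apply, map_sub, map_nsmul]
    _ ≤ (2 : ℕ) * (‖A - B‖ / γ * ‖h‖) + ‖A - B‖ / ((2 * γ : ℝ≥0) : ℝ) * ‖h‖ :=
        norm_sub_le_of_le (norm_nsmul_le.trans (by gcongr)) h_double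
    _ = 5 / 2 * (‖A - B‖ / γ) * ‖h‖ := by
        push_cast
        field

end Bernstein

section Holder

lemma holderWith_of_dist_le {X Y : Type*} [PseudoMetricSpace X] [PseudoMetricSpace Y]
    {C α : ℝ≥0} {f : X → Y} (hf : ∀ x y, dist (f x) (f y) ≤ C * dist x y ^ (α : ℝ)) :
    HolderWith C α f := fun x y ↦ by
  rw [edist_nndist, edist_nndist, ← ENNReal.coe_rpow_of_nonneg _ α.coe_nonneg, ← ENNReal.coe_mul,
    ENNReal.coe_le_coe]
  exact_mod_cast hf x y

lemma exists_boundedContinuousFunction_holderWith_eqOn_Icc {Y : Type*} [PseudoMetricSpace Y]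
    {C α : ℝ≥0} {f : ℝ → Y} (hf : HolderWith C α f) (hα : 0 < α) {a b : ℝ} (hab : a ≤ b) :
    ∃ g : ℝ →ᵇ Y, HolderWith C α g ∧ Set.EqOn f g (Set.Icc a b) := by
  let f_Icc : C(Set.Icc a b, Y) := ⟨fun x ↦ f x, (hf.continuous hα).comp continuous_subtype_val⟩
  refine ⟨(BoundedContinuousFunction.mkOfCompact f_Icc).compContinuous
    ⟨Set.projIcc a b hab, continuous_projIcc⟩, ?_, fun x hx ↦ ?_⟩
  · have h_clamp : HolderWith (1 * 1) 1 (Subtype.val ∘ Set.projIcc a b hab) :=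
      holderWith_one.2 ((LipschitzWith.subtype_val _).comp (LipschitzWith.projIcc hab))
    have h_comp := hf.comp h_clamp
    rw [one_mul, NNReal.one_rpow, mul_one, mul_one] at h_comp
    exact h_comp
  · simp [f_Icc, Set.projIcc_of_mem hab hx]

lemma two_rpow_le_one_add {α : ℝ} (h0 : 0 ≤ α) (h1 : α ≤ 1) : (2 : ℝ) ^ α ≤ 1 + α := by
  simpa [one_add_one_eq_two] using rpow_one_add_le_one_add_mul_self (s := 1) (by norm_num) h0 h1

variable {H : Type*} [NormedAddCommGroup H] [InnerProductSpace ℂ H] [CompleteSpace H]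
  {A B : H →L[ℂ] H} {C α : ℝ≥0}

lemma norm_cfcSub_le_of_holderWith_of_ne {f : ℝ →ᵇ ℝ} (hf : HolderWith C α f) (hα : α < 1)
    (hA : IsSelfAdjoint A) (hB : IsSelfAdjoint B) (hAB : A ≠ B) :
    ‖cfcSub A B f‖ ≤ 2 * (3 * (C * ‖A - B‖ ^ (α : ℝ))) +
      5 / 2 * (3 * (C * ‖A - B‖ ^ (α : ℝ))) * (2 * 2 ^ (α : ℝ) + 1) / (2 - 2 ^ (α : ℝ)) := by
  have h_scale (n : ℕ) : 2 ^ n * ‖A - B‖₊ ≠ 0 :=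
    mul_ne_zero (by positivity) (nnnorm_ne_zero_iff.2 (sub_ne_zero.2 hAB))
  refine norm_le_of_commute_of_norm_sub_le
    (Q := fun n ↦ extrapolatedPoissonAverage (2 ^ n * ‖A - B‖₊))
    (fun n ↦ commute_extrapolatedPoissonAverage _ _) zero_le_two (by norm_num) ?_
    (norm_cfcSub_le A B) (fun n h ↦ ?_) (fun n ↦ ?_)
  · linarith [two_rpow_le_one_add α.coe_nonneg hα.le, NNReal.coe_lt_one.2 hα]
  · refine (norm_cfcSub_extrapolatedPoissonAverage_le (h_scale n) h hA hB).trans_eq ?_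
    have h_norm : ‖A - B‖ ≠ 0 := norm_ne_zero_iff.2 (sub_ne_zero.2 hAB)
    push_cast
    field
  · refine (norm_sub_extrapolatedPoissonAverage_le (h_scale n) hf
      (hα.le.trans one_le_two)).trans_eq ?_
    push_cast
    rw [Real.mul_rpow (by positivity) (norm_nonneg _), ← Real.rpow_pow_comm zero_le_two]
    ring

lemma norm_cfcSub_le_of_holderWith {f : ℝ →ᵇ ℝ} (hf : HolderWith C α f) (hα : α < 1)
    (hA : IsSelfAdjoint A) (hB : IsSelfAdjoint B) :
    ‖cfcSub A B f‖ ≤ 44 * (1 - α : ℝ)⁻¹ * C * ‖A - B‖ ^ (α : ℝ) := by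
  have hα_pos : 0 < 1 - (α : ℝ) := sub_pos.2 (NNReal.coe_lt_one.2 hα)
  rcases eq_or_ne A B with rfl | hAB
  · rw [cfcSub_apply, sub_self, norm_zero]
    positivity
  have h_pow := two_rpow_le_one_add α.coe_nonneg hα.le
  have h_num : 2 * 2 ^ (α : ℝ) + 1 ≤ (5 : ℝ) := by linarith
  have h_den : (1 - α : ℝ) ≤ 2 - 2 ^ (α : ℝ) := by linarith
  calc ‖cfcSub A B f‖
      ≤ 2 * (3 * (C * ‖A - B‖ ^ (α : ℝ))) +
          5 / 2 * (3 * (C * ‖A - B‖ ^ (α : ℝ))) * (2 * 2 ^ (α : ℝ) + 1) / (2 - 2 ^ (α : ℝ)) :=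
        norm_cfcSub_le_of_holderWith_of_ne hf hα hA hB hAB
    _ ≤ 2 * (3 * (C * ‖A - B‖ ^ (α : ℝ))) +
          5 / 2 * (3 * (C * ‖A - B‖ ^ (α : ℝ))) * 5 / (1 - α) := by
        gcongr
    _ = (6 * (1 - α) + 75 / 2) * (1 - α : ℝ)⁻¹ * C * ‖A - B‖ ^ (α : ℝ) := by field
    _ ≤ 44 * (1 - α : ℝ)⁻¹ * C * ‖A - B‖ ^ (α : ℝ) := by
        gcongr
        linarith [α.coe_nonneg]

end Holder

end OperatorHolder

/-- Aleksandrov–Peller: every Hölder function of order `α ∈ (0,1)` is operator Hölder of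
order `α`, with constant `c/(1-α)` for an absolute constant `c`. Here `f(A)` is given by
the continuous functional calculus for the bounded self-adjoint operator `A`. -/
theorem holder_implies_operator_holder :
    ∃ c : ℝ, 0 < c ∧
      ∀ (α : ℝ), 0 < α → α < 1 →
      ∀ (H : Type*) [NormedAddCommGroup H] [InnerProductSpace ℂ H] [CompleteSpace H],
      ∀ (f : ℝ → ℝ) (C : ℝ),
        (∀ x y : ℝ, |f x - f y| ≤ C * |x - y| ^ α) →
      ∀ (A B : H →L[ℂ] H), IsSelfAdjoint A → IsSelfAdjoint B →
        ‖cfc f A - cfc f B‖ ≤ c * (1 - α)⁻¹ * C * ‖A - B‖ ^ α := by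
  refine ⟨44, by norm_num, fun α h0 h1 H _ _ _ f C hf A B hA hB ↦ ?_⟩
  have hC : 0 ≤ C := by simpa using (abs_nonneg _).trans (hf 1 0)
  lift α to ℝ≥0 using h0.le
  lift C to ℝ≥0 using hC
  have h_holder : HolderWith C α f := OperatorHolder.holderWith_of_dist_le hf
  let R := max (‖A‖ * ‖(1 : H →L[ℂ] H)‖) (‖B‖ * ‖(1 : H →L[ℂ] H)‖)
  obtain ⟨g, hg, hfg⟩ :=
    OperatorHolder.exists_boundedContinuousFunction_holderWith_eqOn_Icc h_holder
      (NNReal.coe_pos.1 h0) (neg_le_self (by positivity : 0 ≤ R))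
  have h_cfc {T : H →L[ℂ] H} (hT : ‖T‖ * ‖(1 : H →L[ℂ] H)‖ ≤ R) : cfc f T = cfc g T :=
    cfc_congr fun x hx ↦ hfg (abs_le.1 ((spectrum.norm_le_norm_mul_of_mem hx).trans hT))
  rw [h_cfc (le_max_left _ _), h_cfc (le_max_right _ _)]
  exact OperatorHolder.norm_cfcSub_le_of_holderWith hg (by exact_mod_cast h1) hA hB
end

section
/- Let ω : [0, ∞) → [0, ∞) be a modulus of continuity, i.e., ω is continuous, nondecreasing, subadditive (ω(s + t) ≤ ω(s) + ω(t)), and ω(0) = 0, and assume ∫_1^∞ ω(t)/t² dt < ∞, so that ω_*(x) := x·∫_x^∞ ω(t)/t² dt is finite for every x > 0. There is an absolute constant c > 0 such that whenever f : ℝ → ℝ satisfies |f(x) − f(y)| ≤ ω(|x − y|) for all x, y ∈ ℝ, and A, B are bounded self-adjoint operators on a complex Hilbert space with A ≠ B, then ‖f(A) − f(B)‖ ≤ c·ω_*(‖A − B‖). -/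
open MeasureTheory

/-!
Write `P_A` and `Q_A` for the imaginary and real parts of the resolvent `(A - (x + iy))⁻¹`. The
resolvent identity gives `P_B - P_A = Q_A (A - B) P_B + P_A (A - B) Q_B`, while
`Q_A² + P_A² = y⁻¹ P_A` and `∫ P_A dx = π`. Cauchy–Schwarz, applied under the integral sign, thus
bounds `‖F(A) - F(B)‖` by a multiple of `M ‖A - B‖ / y` when `F` is the convolution of a function
bounded by `M` with the Poisson kernel at scale `y`.

Let `R y` be the Richardson extrapolation of the Poisson kernel. Its first moment is of order `y`,
so `f ⋆ R y` is within `3 ω(y)` of `f`. As convolutions commute, the functions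
`F y = (f ⋆ R y) ⋆ R (2y)` satisfy `F y - F (2y) = (f ⋆ R y - f ⋆ R (4y)) ⋆ R (2y)`, and this
difference contributes `O(ω(y) / y) ‖A - B‖`. Summing over `y = 2ⁿ ‖A - B‖` compares with
`‖A - B‖ ∫ ω(t)/t² dt`, and replacing `f` by `F y` at `y = ‖A - B‖` costs only `O(ω(‖A - B‖))`.
-/

namespace OperatorModulus

open Filter Topology Set ContinuousLinearMap
open scoped Convolution

section Convolution

variable {G : Type*} [MeasurableSpace G] {h φ ψ : G → ℝ} {M : ℝ}

theorem sub_convolution [Sub G] {μ : Measure G} {h₁ h₂ : G → ℝ}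
    (h₁φ : ConvolutionExists h₁ φ (lsmul ℝ ℝ) μ) (h₂φ : ConvolutionExists h₂ φ (lsmul ℝ ℝ) μ) :
    (h₁ - h₂) ⋆[lsmul ℝ ℝ, μ] φ = h₁ ⋆[lsmul ℝ ℝ, μ] φ - h₂ ⋆[lsmul ℝ ℝ, μ] φ := by
  ext a
  simp only [convolution_def, Pi.sub_apply, map_sub, sub_apply]
  exact integral_sub (h₁φ a) (h₂φ a)

variable [AddCommGroup G] [MeasurableAdd₂ G] [MeasurableNeg G]
  {μ : Measure G} [μ.IsAddLeftInvariant] [μ.IsNegInvariant]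

theorem convolutionExists_of_bounded (hh : AEStronglyMeasurable h μ) (hM : ∀ x, |h x| ≤ M)
    (hφ : Integrable φ μ) : ConvolutionExists h φ (lsmul ℝ ℝ) μ :=
  fun a => (hφ.comp_sub_left a).bdd_mul hh (.of_forall hM)

theorem const_convolution (c : ℝ) (φ : G → ℝ) :
    (fun _ => c) ⋆[lsmul ℝ ℝ, μ] φ = fun _ => c * ∫ x, φ x ∂μ := by
  ext a
  simp only [convolution_lsmul, smul_eq_mul]
  rw [integral_const_mul, integral_sub_left_eq_self φ μ a]

theorem abs_convolution_sub_le {x : G} {b : ℝ} {g : G → ℝ} (hφ : Integrable φ μ)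
    (hφ_one : ∫ x, φ x ∂μ = 1) (hh : ConvolutionExistsAt h φ x (lsmul ℝ ℝ) μ)
    (hg : Integrable g μ) (hle : ∀ t, |h t - b| * |φ (x - t)| ≤ g (x - t)) :
    |(h ⋆[lsmul ℝ ℝ, μ] φ) x - b| ≤ ∫ t, g t ∂μ := by
  have eq_integral : (h ⋆[lsmul ℝ ℝ, μ] φ) x - b = ∫ t, (h t - b) * φ (x - t) ∂μ := by
    have integral_const : ∫ t, b * φ (x - t) ∂μ = b := by
      rw [integral_const_mul, integral_sub_left_eq_self φ μ x, hφ_one, mul_one]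
    have integrable_mul : Integrable (fun t => h t * φ (x - t)) μ := hh
    simp only [sub_mul]
    rw [integral_sub integrable_mul ((hφ.comp_sub_left x).const_mul b), integral_const]
    rfl
  rw [eq_integral, ← integral_sub_left_eq_self g μ x, ← Real.norm_eq_abs]
  refine norm_integral_le_of_norm_le (hg.comp_sub_left x) (.of_forall fun t => ?_)
  rw [norm_mul]
  exact hle t

theorem convolution_comm (φ ψ : G → ℝ) :
    φ ⋆[lsmul ℝ ℝ, μ] ψ = ψ ⋆[lsmul ℝ ℝ, μ] φ := by
  have flip_lsmul : (lsmul ℝ ℝ : ℝ →L[ℝ] ℝ →L[ℝ] ℝ).flip = lsmul ℝ ℝ := by ext; simp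
  rw [← convolution_flip, flip_lsmul]

variable [SFinite μ]

theorem convolution_assoc_of_bounded (hh : AEStronglyMeasurable h μ) (hM : ∀ x, |h x| ≤ M)
    (hφ : Integrable φ μ) (hψ : Integrable ψ μ) :
    (h ⋆[lsmul ℝ ℝ, μ] φ) ⋆[lsmul ℝ ℝ, μ] ψ = h ⋆[lsmul ℝ ℝ, μ] (φ ⋆[lsmul ℝ ℝ, μ] ψ) := by
  ext a
  refine convolution_assoc _ _ _ _ (fun x y z => smul_assoc x y z) hh hφ.1 hψ.1
    (.of_forall (convolutionExists_of_bounded hh hM hφ))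
    (hφ.norm.ae_convolution_exists _ hψ.norm) ?_
  exact ((hφ.norm.integrable_convolution _ hψ.norm).comp_sub_left a).bdd_mul hh.norm
    (.of_forall fun x => (norm_norm (h x)).trans_le (hM x))

theorem convolution_right_comm_of_bounded (hh : AEStronglyMeasurable h μ) (hM : ∀ x, |h x| ≤ M)
    (hφ : Integrable φ μ) (hψ : Integrable ψ μ) :
    (h ⋆[lsmul ℝ ℝ, μ] φ) ⋆[lsmul ℝ ℝ, μ] ψ = (h ⋆[lsmul ℝ ℝ, μ] ψ) ⋆[lsmul ℝ ℝ, μ] φ := by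
  rw [convolution_assoc_of_bounded hh hM hφ hψ, convolution_comm φ ψ,
    convolution_assoc_of_bounded hh hM hψ hφ]

end Convolution

theorem continuous_convolution_of_bounded {h φ : ℝ → ℝ} {M : ℝ} (hh : Continuous h)
    (hM : ∀ x, |h x| ≤ M) (hφ : Integrable φ) : Continuous (h ⋆ φ) :=
  BddAbove.continuous_convolution_left_of_integrable _ ⟨M, forall_mem_range.2 hM⟩ hh hφ

/-- The Poisson kernel `y / (u² + y²)` of the upper half-plane, without the factor `π⁻¹`: the
imaginary part of `(u - iy)⁻¹`. -/
noncomputable def poisson (y u : ℝ) : ℝ := y / (u ^ 2 + y ^ 2)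

/-- The conjugate Poisson kernel: the real part of `(u - iy)⁻¹`. -/
noncomputable def conjPoisson (y u : ℝ) : ℝ := u / (u ^ 2 + y ^ 2)

/-- The Richardson extrapolation of the Poisson kernel, of total mass `1`. The `u⁻²` tails of the
two Poisson kernels cancel, so that its first absolute moment is finite. -/
noncomputable def richardson (y u : ℝ) : ℝ := Real.pi⁻¹ * (2 * poisson y u - poisson (2 * y) u)

section Kernels

variable {y : ℝ}

theorem poisson_nonneg (hy : 0 < y) (u : ℝ) : 0 ≤ poisson y u := by
  unfold poisson
  positivity

theorem continuous_poisson (hy : 0 < y) : Continuous (poisson y) :=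
  continuous_const.div (by fun_prop) fun u => by positivity

theorem continuous_conjPoisson (hy : 0 < y) : Continuous (conjPoisson y) :=
  continuous_id.div (by fun_prop) fun u => by positivity

theorem continuous_poisson_sub (hy : 0 < y) (x : ℝ) : Continuous fun t => poisson y (t - x) :=
  (continuous_poisson hy).comp (continuous_sub_right x)

theorem continuous_conjPoisson_sub (hy : 0 < y) (x : ℝ) :
    Continuous fun t => conjPoisson y (t - x) :=
  (continuous_conjPoisson hy).comp (continuous_sub_right x)

theorem poisson_eq_inv_one_add_sq (hy : 0 < y) (u : ℝ) :
    poisson y u = y⁻¹ * (1 + (u / y) ^ 2)⁻¹ := by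
  unfold poisson
  field_simp
  ring

theorem integrable_poisson (hy : 0 < y) : Integrable (poisson y) :=
  ((integrable_inv_one_add_sq.comp_div hy.ne').const_mul y⁻¹).congr
    (.of_forall fun u => (poisson_eq_inv_one_add_sq hy u).symm)

theorem integral_poisson (hy : 0 < y) : ∫ u, poisson y u = Real.pi := by
  simp_rw [poisson_eq_inv_one_add_sq hy]
  rw [integral_const_mul, Measure.integral_comp_div (fun x : ℝ => (1 + x ^ 2)⁻¹) y,
    integral_univ_inv_one_add_sq, abs_of_pos hy, smul_eq_mul, inv_mul_cancel_left₀ hy.ne']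

theorem poisson_sub_le (hy : 0 < y) {r t : ℝ} (ht : |t| ≤ r) (x : ℝ) :
    poisson y (t - x) ≤ (2 + 2 * r ^ 2 / y ^ 2) * poisson y x := by
  have ht_sq : t ^ 2 ≤ r ^ 2 := sq_le_sq.2 (ht.trans (le_abs_self r))
  have den_le : x ^ 2 + y ^ 2 ≤ (2 + 2 * r ^ 2 / y ^ 2) * ((t - x) ^ 2 + y ^ 2) := by
    have expand : (2 + 2 * r ^ 2 / y ^ 2) * ((t - x) ^ 2 + y ^ 2) =
        2 * (t - x) ^ 2 + 2 * y ^ 2 + 2 * r ^ 2 + 2 * r ^ 2 / y ^ 2 * (t - x) ^ 2 := by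
      field_simp
      ring
    have tail_nonneg : 0 ≤ 2 * r ^ 2 / y ^ 2 * (t - x) ^ 2 := by positivity
    nlinarith [sq_nonneg (x - 2 * t), sq_nonneg y]
  unfold poisson
  rw [mul_div_assoc', div_le_div_iff₀ (by positivity) (by positivity)]
  nlinarith

theorem integrable_richardson (hy : 0 < y) : Integrable (richardson y) :=
  (((integrable_poisson hy).const_mul 2).sub
    (integrable_poisson (mul_pos two_pos hy))).const_mul Real.pi⁻¹

theorem integral_richardson (hy : 0 < y) : ∫ u, richardson y u = 1 := by
  unfold richardson
  rw [integral_const_mul, integral_sub ((integrable_poisson hy).const_mul 2)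
    (integrable_poisson (mul_pos two_pos hy)), integral_const_mul, integral_poisson hy,
    integral_poisson (mul_pos two_pos hy)]
  field_simp
  norm_num

theorem richardson_eq (hy : 0 < y) (u : ℝ) :
    richardson y u = Real.pi⁻¹ * (6 * y ^ 2 / (u ^ 2 + 4 * y ^ 2)) * poisson y u := by
  unfold richardson poisson
  rw [mul_pow]
  field_simp
  ring

theorem richardson_nonneg (hy : 0 < y) (u : ℝ) : 0 ≤ richardson y u := by
  have := poisson_nonneg hy u
  rw [richardson_eq hy]
  positivity

theorem one_add_div_mul_richardson_le (hy : 0 < y) (u : ℝ) :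
    (1 + |u| / y) * richardson y u ≤ 3 * Real.pi⁻¹ * poisson y u := by
  have coeff_le : (1 + |u| / y) * (6 * y ^ 2 / (u ^ 2 + 4 * y ^ 2)) ≤ 3 := by
    have clear_inner : (1 + |u| / y) * (6 * y ^ 2 / (u ^ 2 + 4 * y ^ 2)) =
        6 * y * (y + |u|) / (u ^ 2 + 4 * y ^ 2) := by field_simp
    rw [clear_inner, div_le_iff₀ (by positivity)]
    nlinarith [sq_nonneg (|u| - y), sq_nonneg y, sq_abs u]
  have := poisson_nonneg hy u
  calc (1 + |u| / y) * richardson y u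
      = (1 + |u| / y) * (6 * y ^ 2 / (u ^ 2 + 4 * y ^ 2)) * (Real.pi⁻¹ * poisson y u) := by
        rw [richardson_eq hy]; ring
    _ ≤ 3 * (Real.pi⁻¹ * poisson y u) := by gcongr
    _ = 3 * Real.pi⁻¹ * poisson y u := by ring

variable {h : ℝ → ℝ} {M : ℝ}

theorem abs_convolution_richardson_le (hy : 0 < y) (hh : Continuous h) (hM : ∀ x, |h x| ≤ M)
    (a : ℝ) : |(h ⋆ richardson y) a| ≤ M := by
  have hR := integrable_richardson hy
  have bound := abs_convolution_sub_le (b := 0) hR (integral_richardson hy)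
    (convolutionExists_of_bounded hh.aestronglyMeasurable hM hR a) (hR.const_mul M) fun t => by
      rw [sub_zero, abs_of_nonneg (richardson_nonneg hy _)]
      exact mul_le_mul_of_nonneg_right (hM t) (richardson_nonneg hy _)
  rwa [sub_zero, integral_const_mul, integral_richardson hy, mul_one] at bound

theorem abs_convolution_richardson_sub_le (hy : 0 < y) (hh : Continuous h) (hM : ∀ x, |h x| ≤ M)
    {W a : ℝ} (hW : ∀ x, |h x - h a| ≤ (1 + |a - x| / y) * W) :
    |(h ⋆ richardson y) a - h a| ≤ 3 * W := by
  have hW_nonneg : 0 ≤ W := by simpa using hW a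
  have hR := integrable_richardson hy
  have bound := abs_convolution_sub_le hR (integral_richardson hy)
    (convolutionExists_of_bounded hh.aestronglyMeasurable hM hR a)
    ((integrable_poisson hy).const_mul (3 * Real.pi⁻¹ * W)) fun t => by
      have hR_nonneg := richardson_nonneg hy (a - t)
      calc |h t - h a| * |richardson y (a - t)|
          ≤ (1 + |a - t| / y) * W * richardson y (a - t) := by
            rw [abs_of_nonneg hR_nonneg]; gcongr; exact hW t
        _ = (1 + |a - t| / y) * richardson y (a - t) * W := by ring
        _ ≤ 3 * Real.pi⁻¹ * poisson y (a - t) * W := by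
            exact mul_le_mul_of_nonneg_right (one_add_div_mul_richardson_le hy _) hW_nonneg
        _ = 3 * Real.pi⁻¹ * W * poisson y (a - t) := by ring
  rw [integral_const_mul, integral_poisson hy] at bound
  convert bound using 1
  field_simp

end Kernels

section Resolvent

variable {𝒜 : Type*} [CStarAlgebra 𝒜] {a b : 𝒜} {y : ℝ}

/-- The imaginary part of the resolvent `(a - (x + iy))⁻¹` of a self-adjoint element `a`. -/
noncomputable def poissonOp (y : ℝ) (a : 𝒜) (x : ℝ) : 𝒜 := cfc (fun t => poisson y (t - x)) a

/-- The real part of the resolvent `(a - (x + iy))⁻¹` of a self-adjoint element `a`. -/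
noncomputable def conjPoissonOp (y : ℝ) (a : 𝒜) (x : ℝ) : 𝒜 :=
  cfc (fun t => conjPoisson y (t - x)) a

theorem isSelfAdjoint_poissonOp (y : ℝ) (a : 𝒜) (x : ℝ) : IsSelfAdjoint (poissonOp y a x) :=
  cfc_predicate _ a

theorem isSelfAdjoint_conjPoissonOp (y : ℝ) (a : 𝒜) (x : ℝ) : IsSelfAdjoint (conjPoissonOp y a x) :=
  cfc_predicate _ a

theorem cfc_sub_const (ha : IsSelfAdjoint a) (x : ℝ) :
    cfc (fun t => t - x) a = a - algebraMap ℝ 𝒜 x := by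
  rw [cfc_sub (fun t => t) (fun _ => x) a, cfc_const x a, cfc_id' ℝ a]

theorem sub_mul_poissonOp (hy : 0 < y) (ha : IsSelfAdjoint a) (x : ℝ) :
    (a - algebraMap ℝ 𝒜 x) * poissonOp y a x = y • conjPoissonOp y a x := by
  have hP := continuous_poisson_sub hy x
  have hQ := continuous_conjPoisson_sub hy x
  unfold poissonOp conjPoissonOp
  rw [← cfc_sub_const ha, ← cfc_mul _ _ a (by fun_prop) hP.continuousOn,
    ← cfc_const_mul _ _ a hQ.continuousOn]
  congr 1 with t
  unfold poisson conjPoisson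
  ring

theorem sub_mul_conjPoissonOp (hy : 0 < y) (ha : IsSelfAdjoint a) (x : ℝ) :
    (a - algebraMap ℝ 𝒜 x) * conjPoissonOp y a x = 1 - y • poissonOp y a x := by
  have hP := continuous_poisson_sub hy x
  have hQ := continuous_conjPoisson_sub hy x
  unfold poissonOp conjPoissonOp
  rw [← cfc_sub_const ha, ← cfc_mul _ _ a (by fun_prop) hQ.continuousOn,
    ← cfc_const_mul _ _ a hP.continuousOn, ← cfc_const_one ℝ a,
    ← cfc_sub _ _ a (by fun_prop) (hP.const_mul y).continuousOn]
  congr 1 with t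
  unfold poisson conjPoisson
  field_simp
  ring

theorem poissonOp_mul_sub (hy : 0 < y) (ha : IsSelfAdjoint a) (x : ℝ) :
    poissonOp y a x * (a - algebraMap ℝ 𝒜 x) = y • conjPoissonOp y a x := by
  rw [← sub_mul_poissonOp hy ha, ← cfc_sub_const ha]
  exact cfc_commute_cfc _ _ a

theorem conjPoissonOp_mul_sub (hy : 0 < y) (ha : IsSelfAdjoint a) (x : ℝ) :
    conjPoissonOp y a x * (a - algebraMap ℝ 𝒜 x) = 1 - y • poissonOp y a x := by
  rw [← sub_mul_conjPoissonOp hy ha, ← cfc_sub_const ha]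
  exact cfc_commute_cfc _ _ a

theorem poissonOp_sub_poissonOp (hy : 0 < y) (ha : IsSelfAdjoint a) (hb : IsSelfAdjoint b) (x : ℝ) :
    poissonOp y b x - poissonOp y a x =
      conjPoissonOp y a x * (a - b) * poissonOp y b x +
        poissonOp y a x * (a - b) * conjPoissonOp y b x := by
  set Pa := poissonOp y a x
  set Pb := poissonOp y b x
  set Qa := conjPoissonOp y a x
  set Qb := conjPoissonOp y b x
  set X := a - algebraMap ℝ 𝒜 x with hX
  set Y := b - algebraMap ℝ 𝒜 x with hY
  have sub_eq : a - b = X - Y := by rw [hX, hY, sub_sub_sub_cancel_right]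
  calc Pb - Pa = (1 - y • Pa) * Pb - Qa * (y • Qb) + (y • Qa * Qb - Pa * (1 - y • Pb)) := by
        simp only [sub_mul, mul_sub, one_mul, mul_one, smul_mul_assoc, mul_smul_comm]
        abel
    _ = Qa * X * Pb - Qa * (Y * Pb) + (Pa * X * Qb - Pa * (Y * Qb)) := by
        rw [conjPoissonOp_mul_sub hy ha, sub_mul_poissonOp hy hb, poissonOp_mul_sub hy ha,
          sub_mul_conjPoissonOp hy hb]
    _ = Qa * (a - b) * Pb + Pa * (a - b) * Qb := by
        rw [sub_eq]
        noncomm_ring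

theorem conjPoissonOp_sq_add_poissonOp_sq (hy : 0 < y) (a : 𝒜) (x : ℝ) :
    conjPoissonOp y a x * conjPoissonOp y a x + poissonOp y a x * poissonOp y a x =
      y⁻¹ • poissonOp y a x := by
  have hP := continuous_poisson_sub hy x
  have hQ := continuous_conjPoisson_sub hy x
  unfold poissonOp conjPoissonOp
  rw [← cfc_mul _ _ a hQ.continuousOn hQ.continuousOn,
    ← cfc_mul _ _ a hP.continuousOn hP.continuousOn, ← cfc_const_mul _ _ a hP.continuousOn,
    ← cfc_add a _ _ (by exact (hQ.mul hQ).continuousOn) (by exact (hP.mul hP).continuousOn)]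
  congr 1 with t
  unfold poisson conjPoisson
  field_simp

variable {h : ℝ → ℝ} {M : ℝ}

theorem smul_poissonOp (hy : 0 < y) (c : ℝ) (a : 𝒜) (x : ℝ) :
    c • poissonOp y a x = cfc (fun t => c * poisson y (t - x)) a :=
  (cfc_const_mul _ _ a (continuous_poisson_sub hy x).continuousOn).symm

theorem continuous_uncurry_mul_poisson (hy : 0 < y) (hh : Continuous h) :
    Continuous (Function.uncurry fun x t => h x * poisson y (t - x)) :=
  (hh.comp continuous_fst).mul ((continuous_poisson hy).comp (continuous_snd.sub continuous_fst))

theorem exists_integrable_bound_mul_poisson (hy : 0 < y) (hM : ∀ x, |h x| ≤ M) (a : 𝒜) :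
    ∃ g : ℝ → ℝ, Integrable g ∧ ∀ x, ∀ t ∈ spectrum ℝ a, ‖h x * poisson y (t - x)‖ ≤ g x := by
  obtain ⟨r, hr⟩ := (spectrum.isBounded (𝕜 := ℝ) a).exists_norm_le
  refine ⟨_, ((integrable_poisson hy).const_mul (2 + 2 * r ^ 2 / y ^ 2)).const_mul M,
    fun x t ht => ?_⟩
  have hP := poisson_nonneg hy (t - x)
  rw [norm_mul, Real.norm_of_nonneg hP]
  exact mul_le_mul (hM x) (poisson_sub_le hy (hr t ht) x) hP ((abs_nonneg _).trans (hM 0))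

theorem integrable_smul_poissonOp (hy : 0 < y) (ha : IsSelfAdjoint a) (hh : Continuous h)
    (hM : ∀ x, |h x| ≤ M) : Integrable fun x => h x • poissonOp y a x := by
  obtain ⟨g, hg, hle⟩ := exists_integrable_bound_mul_poisson hy hM a
  simp only [smul_poissonOp hy]
  exact integrable_cfc _ g a (continuous_uncurry_mul_poisson hy hh).continuousOn
    (.of_forall hle) hg.2

theorem cfc_convolution_poisson (hy : 0 < y) (ha : IsSelfAdjoint a) (hh : Continuous h)
    (hM : ∀ x, |h x| ≤ M) : cfc (h ⋆ poisson y) a = ∫ x, h x • poissonOp y a x := by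
  obtain ⟨g, hg, hle⟩ := exists_integrable_bound_mul_poisson hy hM a
  simp only [smul_poissonOp hy]
  exact cfc_integral _ g a (continuous_uncurry_mul_poisson hy hh).continuousOn
    (.of_forall hle) hg.2

theorem integrable_smul_poissonOp_sub (hy : 0 < y) (ha : IsSelfAdjoint a) (hb : IsSelfAdjoint b)
    (hh : Continuous h) (hM : ∀ x, |h x| ≤ M) :
    Integrable fun x => h x • (poissonOp y a x - poissonOp y b x) := by
  simp only [smul_sub]
  exact (integrable_smul_poissonOp hy ha hh hM).sub (integrable_smul_poissonOp hy hb hh hM)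

theorem cfc_convolution_poisson_sub (hy : 0 < y) (ha : IsSelfAdjoint a) (hb : IsSelfAdjoint b)
    (hh : Continuous h) (hM : ∀ x, |h x| ≤ M) :
    cfc (h ⋆ poisson y) a - cfc (h ⋆ poisson y) b =
      ∫ x, h x • (poissonOp y a x - poissonOp y b x) := by
  simp only [smul_sub]
  rw [integral_sub (integrable_smul_poissonOp hy ha hh hM) (integrable_smul_poissonOp hy hb hh hM),
    cfc_convolution_poisson hy ha hh hM, cfc_convolution_poisson hy hb hh hM]

theorem integrable_poissonOp (hy : 0 < y) (ha : IsSelfAdjoint a) : Integrable (poissonOp y a) := by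
  simpa using integrable_smul_poissonOp (h := 1) (M := 1) hy ha continuous_const (by simp)

theorem integral_poissonOp (hy : 0 < y) (ha : IsSelfAdjoint a) :
    ∫ x, poissonOp y a x = Real.pi • 1 := by
  have eq_cfc := cfc_convolution_poisson (h := fun _ => 1) (M := 1) hy ha continuous_const (by simp)
  rw [const_convolution, integral_poisson hy, one_mul, cfc_const _ a] at eq_cfc
  simpa [Algebra.algebraMap_eq_smul_one] using eq_cfc.symm

end Resolvent

section HilbertSpace

variable {H : Type*} [NormedAddCommGroup H] [InnerProductSpace ℂ H]

/-- The real-linear functional `T ↦ re ⟪T u, v⟫` on the bounded operators. -/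
noncomputable def reInnerCLM (u v : H) : (H →L[ℂ] H) →L[ℝ] ℝ :=
  Complex.reCLM.comp (((innerSL ℂ v).comp (ContinuousLinearMap.apply ℂ H u)).restrictScalars ℝ)

theorem reInnerCLM_apply (u v : H) (T : H →L[ℂ] H) : reInnerCLM u v T = (inner ℂ (T u) v).re :=
  inner_re_symm (𝕜 := ℂ) v (T u)

variable [CompleteSpace H] {A B : H →L[ℂ] H} {y : ℝ}

theorem norm_sq_apply_eq_reInnerCLM {T : H →L[ℂ] H} (hT : IsSelfAdjoint T) (v : H) :
    ‖T v‖ ^ 2 = reInnerCLM v v (T * T) := by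
  rw [reInnerCLM_apply, T.apply_norm_sq_eq_inner_adjoint_left, hT.adjoint_eq]
  rfl

theorem abs_reInnerCLM_mul_mul_le {S : H →L[ℂ] H} (hS : IsSelfAdjoint S) (D T : H →L[ℂ] H)
    (u v : H) : |reInnerCLM u v (S * D * T)| ≤ ‖D‖ * (‖S v‖ * ‖T u‖) := by
  have move_left : inner ℂ ((S * D * T) u) v = inner ℂ (D (T u)) (S v) :=
    (isSelfAdjoint_iff_isSymmetric.1 hS) (D (T u)) v
  calc |reInnerCLM u v (S * D * T)| ≤ ‖inner ℂ (D (T u)) (S v)‖ := by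
        rw [reInnerCLM_apply, move_left]
        exact Complex.abs_re_le_norm _
    _ ≤ ‖D (T u)‖ * ‖S v‖ := norm_inner_le_norm _ _
    _ ≤ ‖D‖ * ‖T u‖ * ‖S v‖ := by gcongr; exact D.le_opNorm _
    _ = ‖D‖ * (‖S v‖ * ‖T u‖) := by ring

theorem norm_sq_conjPoissonOp_add_norm_sq_poissonOp (hy : 0 < y) (A : H →L[ℂ] H) (x : ℝ) (v : H) :
    ‖conjPoissonOp y A x v‖ ^ 2 + ‖poissonOp y A x v‖ ^ 2 =
      y⁻¹ * reInnerCLM v v (poissonOp y A x) := by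
  rw [norm_sq_apply_eq_reInnerCLM (isSelfAdjoint_conjPoissonOp y A x),
    norm_sq_apply_eq_reInnerCLM (isSelfAdjoint_poissonOp y A x), ← map_add,
    conjPoissonOp_sq_add_poissonOp_sq hy, map_smul, smul_eq_mul]

theorem integral_reInnerCLM_poissonOp (hy : 0 < y) (hA : IsSelfAdjoint A) (v : H) :
    ∫ x, reInnerCLM v v (poissonOp y A x) = Real.pi * ‖v‖ ^ 2 := by
  rw [(reInnerCLM v v).integral_comp_comm (integrable_poissonOp hy hA), integral_poissonOp hy hA,
    map_smul, reInnerCLM_apply, one_apply_eq_self, smul_eq_mul]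
  exact congrArg _ (inner_self_eq_norm_sq (𝕜 := ℂ) v)

theorem abs_reInnerCLM_poissonOp_sub_le (hy : 0 < y) (hA : IsSelfAdjoint A) (hB : IsSelfAdjoint B)
    (x : ℝ) (u v : H) :
    |reInnerCLM u v (poissonOp y A x - poissonOp y B x)| ≤
      ‖A - B‖ / (2 * y) *
        (reInnerCLM v v (poissonOp y B x) + reInnerCLM u u (poissonOp y A x)) := by
  have hv := norm_sq_conjPoissonOp_add_norm_sq_poissonOp hy B x v
  have hu := norm_sq_conjPoissonOp_add_norm_sq_poissonOp hy A x u
  have QDP_le := abs_reInnerCLM_mul_mul_le (isSelfAdjoint_conjPoissonOp y B x) (B - A)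
    (poissonOp y A x) u v
  have PDQ_le := abs_reInnerCLM_mul_mul_le (isSelfAdjoint_poissonOp y B x) (B - A)
    (conjPoissonOp y A x) u v
  rw [poissonOp_sub_poissonOp hy hB hA, map_add, norm_sub_rev A B]
  set pB := ‖poissonOp y B x v‖
  set qB := ‖conjPoissonOp y B x v‖
  set pA := ‖poissonOp y A x u‖
  set qA := ‖conjPoissonOp y A x u‖
  refine (abs_add_le _ _).trans ((add_le_add QDP_le PDQ_le).trans ?_)
  calc ‖B - A‖ * (qB * pA) + ‖B - A‖ * (pB * qA)
      = ‖B - A‖ / 2 * (2 * qB * pA + 2 * pB * qA) := by ring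
    _ ≤ ‖B - A‖ / 2 * (qB ^ 2 + pA ^ 2 + (pB ^ 2 + qA ^ 2)) := by
        gcongr <;> exact two_mul_le_add_sq _ _
    _ = ‖B - A‖ / 2 * (qB ^ 2 + pB ^ 2 + (qA ^ 2 + pA ^ 2)) := by ring
    _ = _ := by rw [hv, hu]; field_simp

variable {h : ℝ → ℝ} {M : ℝ}

theorem norm_cfc_convolution_poisson_sub_le (hy : 0 < y) (hA : IsSelfAdjoint A)
    (hB : IsSelfAdjoint B) (hh : Continuous h) (hM : ∀ x, |h x| ≤ M) :
    ‖cfc (h ⋆ poisson y) A - cfc (h ⋆ poisson y) B‖ ≤ Real.pi * M * (‖A - B‖ / y) := by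
  have hM_nonneg : 0 ≤ M := (abs_nonneg _).trans (hM 0)
  have hi := integrable_smul_poissonOp_sub hy hA hB hh hM
  refine opNorm_le_of_re_inner_le (by positivity) fun u v hu hv => ?_
  have hiA := (reInnerCLM u u).integrable_comp (integrable_poissonOp hy hA)
  have hiB := (reInnerCLM v v).integrable_comp (integrable_poissonOp hy hB)
  rw [cfc_convolution_poisson_sub hy hA hB hh hM]
  refine (reInnerCLM_apply u v _).symm.trans_le ?_
  rw [← (reInnerCLM u v).integral_comp_comm hi]
  calc ∫ x, reInnerCLM u v (h x • (poissonOp y A x - poissonOp y B x))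
      ≤ ∫ x, M * (‖A - B‖ / (2 * y)) *
          (reInnerCLM v v (poissonOp y B x) + reInnerCLM u u (poissonOp y A x)) := by
        refine integral_mono ((reInnerCLM u v).integrable_comp hi)
          ((hiB.add hiA).const_mul _) fun x => (le_abs_self _).trans ?_
        rw [map_smul, smul_eq_mul, abs_mul, mul_assoc]
        exact mul_le_mul (hM x) (abs_reInnerCLM_poissonOp_sub_le hy hA hB x u v) (abs_nonneg _)
          hM_nonneg
    _ = Real.pi * M * (‖A - B‖ / y) := by
        rw [integral_const_mul, integral_add hiB hiA, integral_reInnerCLM_poissonOp hy hB,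
          integral_reInnerCLM_poissonOp hy hA, hu, hv]
        field_simp
        norm_num

theorem convolution_richardson (hy : 0 < y) (hh : Continuous h) (hM : ∀ x, |h x| ≤ M) :
    h ⋆ richardson y =
      fun a => (2 / Real.pi) * (h ⋆ poisson y) a - Real.pi⁻¹ * (h ⋆ poisson (2 * y)) a := by
  have hi {z : ℝ} (hz : 0 < z) :=
    convolutionExists_of_bounded hh.aestronglyMeasurable hM (integrable_poisson hz)
  ext a
  have h₁ : Integrable fun t => h t * poisson y (a - t) := hi hy a
  have h₂ : Integrable fun t => h t * poisson (2 * y) (a - t) := hi (mul_pos two_pos hy) a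
  simp only [convolution_lsmul, smul_eq_mul]
  rw [← integral_const_mul, ← integral_const_mul, ← integral_sub (h₁.const_mul _) (h₂.const_mul _)]
  congr 1 with t
  unfold richardson
  ring

theorem cfc_convolution_richardson {𝒜 : Type*} [CStarAlgebra 𝒜] (hy : 0 < y) (hh : Continuous h)
    (hM : ∀ x, |h x| ≤ M) (a : 𝒜) :
    cfc (h ⋆ richardson y) a =
      (2 / Real.pi) • cfc (h ⋆ poisson y) a - Real.pi⁻¹ • cfc (h ⋆ poisson (2 * y)) a := by
  have h₁ := continuous_convolution_of_bounded hh hM (integrable_poisson hy)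
  have h₂ := continuous_convolution_of_bounded hh hM (integrable_poisson (mul_pos two_pos hy))
  rw [convolution_richardson hy hh hM, cfc_sub _ _ a (h₁.const_mul _).continuousOn
    (h₂.const_mul _).continuousOn, cfc_const_mul _ _ a h₁.continuousOn,
    cfc_const_mul _ _ a h₂.continuousOn]

theorem norm_cfc_convolution_richardson_sub_le (hy : 0 < y) (hA : IsSelfAdjoint A)
    (hB : IsSelfAdjoint B) (hh : Continuous h) (hM : ∀ x, |h x| ≤ M) :
    ‖cfc (h ⋆ richardson y) A - cfc (h ⋆ richardson y) B‖ ≤ 5 / 2 * M * (‖A - B‖ / y) := by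
  rw [cfc_convolution_richardson hy hh hM, cfc_convolution_richardson hy hh hM,
    sub_sub_sub_comm, ← smul_sub, ← smul_sub]
  refine (norm_sub_le _ _).trans ?_
  rw [norm_smul_of_nonneg (by positivity), norm_smul_of_nonneg (by positivity)]
  calc _ ≤ 2 / Real.pi * (Real.pi * M * (‖A - B‖ / y)) +
          Real.pi⁻¹ * (Real.pi * M * (‖A - B‖ / (2 * y))) := by
        gcongr
        · exact norm_cfc_convolution_poisson_sub_le hy hA hB hh hM
        · exact norm_cfc_convolution_poisson_sub_le (mul_pos two_pos hy) hA hB hh hM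
    _ = 5 / 2 * M * (‖A - B‖ / y) := by field_simp; norm_num

end HilbertSpace

/-- A modulus of continuity on `[0, ∞)`; the values of `ω` at negative arguments are irrelevant. -/
structure IsModulus (ω : ℝ → ℝ) : Prop where
  continuousOn : ContinuousOn ω (Ici 0)
  monotoneOn : MonotoneOn ω (Ici 0)
  add_le : ∀ s t : ℝ, 0 ≤ s → 0 ≤ t → ω (s + t) ≤ ω s + ω t
  map_zero : ω 0 = 0

/-- The integral `∫_x^∞ ω(t)/t² dt`, so that `ω_*(x) = x * tailIntegral ω x`. -/
noncomputable def tailIntegral (ω : ℝ → ℝ) (x : ℝ) : ℝ := ∫ t in Ioi x, ω t / t ^ 2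

namespace IsModulus

variable {ω f : ℝ → ℝ} {y : ℝ}

theorem nonneg (hω : IsModulus ω) {t : ℝ} (ht : 0 ≤ t) : 0 ≤ ω t :=
  hω.map_zero.symm.trans_le (hω.monotoneOn self_mem_Ici ht ht)

theorem map_two_mul_le (hω : IsModulus ω) (hy : 0 ≤ y) : ω (2 * y) ≤ 2 * ω y := by
  rw [two_mul, two_mul]
  exact hω.add_le y y hy hy

theorem map_nat_mul_le (hω : IsModulus ω) (hy : 0 ≤ y) (n : ℕ) : ω (n * y) ≤ n * ω y := by
  induction n with
  | zero => simp [hω.map_zero]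
  | succ n ih =>
    rw [Nat.cast_succ, add_one_mul, add_one_mul]
    exact (hω.add_le _ _ (by positivity) hy).trans (by gcongr)

theorem map_le_one_add_div_mul (hω : IsModulus ω) (hy : 0 < y) {t : ℝ} (ht : 0 ≤ t) :
    ω t ≤ (1 + t / y) * ω y := by
  have le_ceil_mul : t ≤ ⌈t / y⌉₊ * y := (div_le_iff₀ hy).1 (Nat.le_ceil _)
  have ceil_le : (⌈t / y⌉₊ : ℝ) ≤ 1 + t / y := by
    linarith [Nat.ceil_lt_add_one (div_nonneg ht hy.le)]
  calc ω t ≤ ω (⌈t / y⌉₊ * y) := hω.monotoneOn ht (ht.trans le_ceil_mul) le_ceil_mul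
    _ ≤ ⌈t / y⌉₊ * ω y := hω.map_nat_mul_le hy.le _
    _ ≤ (1 + t / y) * ω y := mul_le_mul_of_nonneg_right ceil_le (hω.nonneg hy.le)

theorem tailIntegral_nonneg (hω : IsModulus ω) (hy : 0 ≤ y) : 0 ≤ tailIntegral ω y :=
  setIntegral_nonneg measurableSet_Ioi fun _ ht =>
    div_nonneg (hω.nonneg (hy.trans (mem_Ioi.1 ht).le)) (sq_nonneg _)

theorem integrableOn_Ioi (hω : IsModulus ω) (hi : IntegrableOn (fun t => ω t / t ^ 2) (Ioi 1))
    (hy : 0 < y) :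
    IntegrableOn (fun t => ω t / t ^ 2) (Ioi y) := by
  have integrableOn_Icc : IntegrableOn (fun t => ω t / t ^ 2) (Icc y 1) :=
    ((hω.continuousOn.mono fun t ht => hy.le.trans ht.1).div (by fun_prop) fun t ht =>
      pow_ne_zero 2 (hy.trans_le ht.1).ne').integrableOn_Icc
  refine (integrableOn_Icc.union hi).mono_set fun t ht => ?_
  exact (le_or_gt t 1).imp (fun h => ⟨(mem_Ioi.1 ht).le, h⟩) id

theorem div_le_tailIntegral_sub (hω : IsModulus ω)
    (hi : IntegrableOn (fun t => ω t / t ^ 2) (Ioi 1)) (hy : 0 < y) :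
    ω y / y ≤ 4 * (tailIntegral ω y - tailIntegral ω (2 * y)) := by
  have y_le : y ≤ 2 * y := by linarith
  have hi_Ioc : IntegrableOn (fun t => ω t / t ^ 2) (Ioc y (2 * y)) :=
    (hω.integrableOn_Ioi hi hy).mono_set Ioc_subset_Ioi_self
  have sub_eq : tailIntegral ω y - tailIntegral ω (2 * y) = ∫ t in Ioc y (2 * y), ω t / t ^ 2 := by
    rw [tailIntegral, ← Ioc_union_Ioi_eq_Ioi y_le, setIntegral_union (Ioc_disjoint_Ioi le_rfl)
      measurableSet_Ioi hi_Ioc (hω.integrableOn_Ioi hi (by positivity)), tailIntegral,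
      add_sub_cancel_right]
  have const_le : ∫ _ in Ioc y (2 * y), ω y / (2 * y) ^ 2 ≤ ∫ t in Ioc y (2 * y), ω t / t ^ 2 := by
    refine setIntegral_mono_on (by simp) hi_Ioc measurableSet_Ioc fun t ht => ?_
    have t_pos : 0 < t := hy.trans ht.1
    exact div_le_div₀ (hω.nonneg t_pos.le) (hω.monotoneOn hy.le t_pos.le ht.1.le) (by positivity)
      (pow_le_pow_left₀ t_pos.le ht.2 2)
  calc ω y / y = 4 * ∫ _ in Ioc y (2 * y), ω y / (2 * y) ^ 2 := by
        rw [setIntegral_const, Real.volume_real_Ioc_of_le y_le, smul_eq_mul]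
        field_simp
        ring
    _ ≤ 4 * (tailIntegral ω y - tailIntegral ω (2 * y)) := by
        rw [sub_eq]
        gcongr

theorem map_le_tailIntegral (hω : IsModulus ω) (hi : IntegrableOn (fun t => ω t / t ^ 2) (Ioi 1))
    (hy : 0 < y) :
    ω y ≤ 4 * (y * tailIntegral ω y) := by
  have div_le := hω.div_le_tailIntegral_sub hi hy
  have := hω.tailIntegral_nonneg (y := 2 * y) (by positivity)
  rw [div_le_iff₀ hy] at div_le
  nlinarith

theorem continuous (hω : IsModulus ω) (hf : ∀ x y, |f x - f y| ≤ ω |x - y|) : Continuous f := by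
  refine continuous_iff_continuousAt.2 fun a => tendsto_iff_norm_sub_tendsto_zero.2 ?_
  have tendsto_modulus : Tendsto (fun x => ω |x - a|) (𝓝 a) (𝓝 0) := by
    have hc : Continuous fun x => ω |x - a| :=
      hω.continuousOn.comp_continuous (by fun_prop) fun x => abs_nonneg (x - a)
    simpa [hω.map_zero] using hc.tendsto a
  exact squeeze_zero (fun _ => norm_nonneg _) (fun x => hf x a) tendsto_modulus

theorem exists_bounded_eqOn (hω : IsModulus ω) (hf : ∀ x y, |f x - f y| ≤ ω |x - y|)
    {s : Set ℝ} (hs : Bornology.IsBounded s) :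
    ∃ g : ℝ → ℝ, ∃ M : ℝ,
      (∀ x y, |g x - g y| ≤ ω |x - y|) ∧ (∀ x, |g x| ≤ M) ∧ EqOn f g s := by
  obtain ⟨r, hr_pos, hr⟩ := hs.exists_pos_norm_le
  have neg_le : -r ≤ r := by linarith
  obtain ⟨M, hM⟩ := isCompact_Icc.exists_bound_of_continuousOn
    (hω.continuous hf).continuousOn (s := Icc (-r) r)
  refine ⟨fun x => f (projIcc (-r) r neg_le x), M, fun x y => ?_, fun x => ?_, fun x hx => ?_⟩
  · exact (hf _ _).trans (hω.monotoneOn (mem_Ici.2 (abs_nonneg _)) (mem_Ici.2 (abs_nonneg _))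
      (abs_projIcc_sub_projIcc neg_le))
  · exact hM _ (projIcc (-r) r neg_le x).2
  · simp only [projIcc_of_mem neg_le (abs_le.1 (hr x hx))]

end IsModulus

/-- The function `f` smoothed at the two consecutive dyadic scales `y` and `2y`. Passing from `y` to
`2y` changes only one of the two factors, because convolutions commute. -/
noncomputable def smoothing (y : ℝ) (f : ℝ → ℝ) : ℝ → ℝ :=
  (f ⋆ richardson y) ⋆ richardson (2 * y)

section Smoothing

variable {f : ℝ → ℝ} {M y : ℝ}

theorem continuous_convolution_richardson (hf : Continuous f) (hM : ∀ x, |f x| ≤ M) (hy : 0 < y) :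
    Continuous (f ⋆ richardson y) :=
  continuous_convolution_of_bounded hf hM (integrable_richardson hy)

theorem continuous_smoothing (hf : Continuous f) (hM : ∀ x, |f x| ≤ M) (hy : 0 < y) :
    Continuous (smoothing y f) :=
  continuous_convolution_richardson (continuous_convolution_richardson hf hM hy)
    (abs_convolution_richardson_le hy hf hM) (mul_pos two_pos hy)

theorem sub_convolution_richardson {g : ℝ → ℝ} {N : ℝ} (hf : Continuous f) (hM : ∀ x, |f x| ≤ M)
    (hg : Continuous g) (hN : ∀ x, |g x| ≤ N) (hy : 0 < y) :
    (f - g) ⋆ richardson y = f ⋆ richardson y - g ⋆ richardson y :=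
  sub_convolution
    (convolutionExists_of_bounded hf.aestronglyMeasurable hM (integrable_richardson hy))
    (convolutionExists_of_bounded hg.aestronglyMeasurable hN (integrable_richardson hy))

theorem smoothing_sub_smoothing_two_mul (hf : Continuous f) (hM : ∀ x, |f x| ≤ M) (hy : 0 < y) :
    smoothing y f - smoothing (2 * y) f =
      (f ⋆ richardson y - f ⋆ richardson (2 * (2 * y))) ⋆ richardson (2 * y) := by
  have hy₂ : 0 < 2 * y := by positivity
  have hy₄ : 0 < 2 * (2 * y) := by positivity
  rw [smoothing, smoothing, convolution_right_comm_of_bounded hf.aestronglyMeasurable hM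
    (integrable_richardson hy₂) (integrable_richardson hy₄)]
  exact (sub_convolution_richardson (continuous_convolution_richardson hf hM hy)
    (abs_convolution_richardson_le hy hf hM) (continuous_convolution_richardson hf hM hy₄)
    (abs_convolution_richardson_le hy₄ hf hM) hy₂).symm

variable {ω : ℝ → ℝ}

theorem abs_convolution_richardson_sub_le_modulus (hω : IsModulus ω)
    (hf : ∀ x y, |f x - f y| ≤ ω |x - y|) (hM : ∀ x, |f x| ≤ M) (hy : 0 < y) (a : ℝ) :
    |(f ⋆ richardson y) a - f a| ≤ 3 * ω y := by
  refine abs_convolution_richardson_sub_le hy (hω.continuous hf) hM fun x => ?_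
  rw [abs_sub_comm a x]
  exact (hf x a).trans (hω.map_le_one_add_div_mul hy (abs_nonneg _))

theorem abs_convolution_richardson_sub_convolution_richardson_le (hω : IsModulus ω)
    (hf : ∀ x y, |f x - f y| ≤ ω |x - y|) (hM : ∀ x, |f x| ≤ M) (hy : 0 < y) (a : ℝ) :
    |(f ⋆ richardson y - f ⋆ richardson (2 * (2 * y))) a| ≤ 15 * ω y := by
  have hy₂ : 0 < 2 * y := by positivity
  have near := abs_convolution_richardson_sub_le_modulus hω hf hM hy a
  have far := abs_convolution_richardson_sub_le_modulus hω hf hM (mul_pos two_pos hy₂) a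
  have tri := abs_sub_le ((f ⋆ richardson y) a) (f a) ((f ⋆ richardson (2 * (2 * y))) a)
  rw [abs_sub_comm (f a)] at tri
  rw [Pi.sub_apply]
  linarith [hω.map_two_mul_le hy.le, hω.map_two_mul_le hy₂.le]

theorem abs_smoothing_sub_le (hω : IsModulus ω) (hf : ∀ x y, |f x - f y| ≤ ω |x - y|)
    (hM : ∀ x, |f x| ≤ M) (hy : 0 < y) (a : ℝ) : |smoothing y f a - f a| ≤ 9 * ω y := by
  have hy₂ : 0 < 2 * y := by positivity
  have hc := hω.continuous hf
  have hc_conv := continuous_convolution_richardson hc hM hy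
  have outer_le : |smoothing y f a - (f ⋆ richardson (2 * y)) a| ≤ 3 * ω y := by
    rw [smoothing, ← Pi.sub_apply, ← sub_convolution_richardson hc_conv
      (abs_convolution_richardson_le hy hc hM) hc hM hy₂]
    exact abs_convolution_richardson_le hy₂ (hc_conv.sub hc)
      (abs_convolution_richardson_sub_le_modulus hω hf hM hy) a
  have inner_le := abs_convolution_richardson_sub_le_modulus hω hf hM hy₂ a
  have tri := abs_sub_le (smoothing y f a) ((f ⋆ richardson (2 * y)) a) (f a)
  linarith [hω.map_two_mul_le hy.le]

end Smoothing

theorem le_of_le_two_mul_add_of_tendsto {E G : ℝ → ℝ} (hE : Tendsto E atTop (𝓝 0))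
    (hG : ∀ y, 0 < y → 0 ≤ G y) (step : ∀ y, 0 < y → E y ≤ E (2 * y) + (G y - G (2 * y)))
    {y : ℝ} (hy : 0 < y) : E y ≤ G y := by
  have telescope (n : ℕ) : E y ≤ E (2 ^ n * y) + (G y - G (2 ^ n * y)) := by
    induction n with
    | zero => simp
    | succ n ih =>
      have := step (2 ^ n * y) (by positivity)
      rw [pow_succ', mul_assoc]
      linarith
  have scales_tendsto : Tendsto (fun n : ℕ => (2 : ℝ) ^ n * y) atTop atTop :=
    (tendsto_pow_atTop_atTop_of_one_lt one_lt_two).atTop_mul_const hy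
  refine ge_of_tendsto' ((zero_add (G y)) ▸ (hE.comp scales_tendsto).add_const (G y)) fun n => ?_
  have := hG (2 ^ n * y) (by positivity)
  simp only [Function.comp_apply]
  linarith [telescope n]

section Estimate

variable {H : Type*} [NormedAddCommGroup H] [InnerProductSpace ℂ H] [CompleteSpace H]
  {A B : H →L[ℂ] H} {f ω : ℝ → ℝ} {M y : ℝ}

theorem tendsto_norm_cfc_smoothing_sub (hA : IsSelfAdjoint A) (hB : IsSelfAdjoint B)
    (hf : Continuous f) (hM : ∀ x, |f x| ≤ M) :
    Tendsto (fun y => ‖cfc (smoothing y f) A - cfc (smoothing y f) B‖) atTop (𝓝 0) := by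
  have bound : ∀ᶠ y in atTop, ‖cfc (smoothing y f) A - cfc (smoothing y f) B‖ ≤
      5 / 2 * M * (‖A - B‖ / (2 * y)) := by
    filter_upwards [eventually_gt_atTop 0] with y hy
    exact norm_cfc_convolution_richardson_sub_le (mul_pos two_pos hy) hA hB
      (continuous_convolution_richardson hf hM hy) (abs_convolution_richardson_le hy hf hM)
  refine squeeze_zero' (.of_forall fun _ => norm_nonneg _) bound ?_
  simpa using ((tendsto_id.const_mul_atTop (two_pos (α := ℝ))).const_div_atTop ‖A - B‖).const_mul
    (5 / 2 * M)

theorem norm_cfc_smoothing_sub_le_two_mul_add (hω : IsModulus ω)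
    (hf : ∀ x y, |f x - f y| ≤ ω |x - y|) (hM : ∀ x, |f x| ≤ M)
    (hA : IsSelfAdjoint A) (hB : IsSelfAdjoint B) (hy : 0 < y) :
    ‖cfc (smoothing y f) A - cfc (smoothing y f) B‖ ≤
      ‖cfc (smoothing (2 * y) f) A - cfc (smoothing (2 * y) f) B‖ +
        75 / 4 * ‖A - B‖ * (ω y / y) := by
  have hy₂ : 0 < 2 * y := by positivity
  have hc := hω.continuous hf
  have cfc_diff (T : H →L[ℂ] H) : cfc (smoothing y f) T = cfc (smoothing (2 * y) f) T +
      cfc ((f ⋆ richardson y - f ⋆ richardson (2 * (2 * y))) ⋆ richardson (2 * y)) T := by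
    rw [← smoothing_sub_smoothing_two_mul hc hM hy, ← sub_eq_iff_eq_add']
    exact (cfc_sub _ _ T (continuous_smoothing hc hM hy).continuousOn
      (continuous_smoothing hc hM hy₂).continuousOn).symm
  rw [cfc_diff A, cfc_diff B, add_sub_add_comm]
  refine (norm_add_le _ _).trans (add_le_add_right ?_ _)
  calc _ ≤ 5 / 2 * (15 * ω y) * (‖A - B‖ / (2 * y)) :=
        norm_cfc_convolution_richardson_sub_le hy₂ hA hB
          ((continuous_convolution_richardson hc hM hy).sub
            (continuous_convolution_richardson hc hM (mul_pos two_pos hy₂)))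
          (abs_convolution_richardson_sub_convolution_richardson_le hω hf hM hy)
    _ = 75 / 4 * ‖A - B‖ * (ω y / y) := by ring

theorem norm_cfc_smoothing_sub_le (hω : IsModulus ω)
    (hi : IntegrableOn (fun t => ω t / t ^ 2) (Ioi 1))
    (hf : ∀ x y, |f x - f y| ≤ ω |x - y|) (hM : ∀ x, |f x| ≤ M)
    (hA : IsSelfAdjoint A) (hB : IsSelfAdjoint B) (hy : 0 < y) :
    ‖cfc (smoothing y f) A - cfc (smoothing y f) B‖ ≤ 75 * ‖A - B‖ * tailIntegral ω y := by
  refine le_of_le_two_mul_add_of_tendsto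
    (E := fun y => ‖cfc (smoothing y f) A - cfc (smoothing y f) B‖)
    (G := fun y => 75 * ‖A - B‖ * tailIntegral ω y)
    (tendsto_norm_cfc_smoothing_sub hA hB (hω.continuous hf) hM)
    (fun y hy => mul_nonneg (by positivity) (hω.tailIntegral_nonneg hy.le)) (fun y hy => ?_) hy
  refine (norm_cfc_smoothing_sub_le_two_mul_add hω hf hM hA hB hy).trans (add_le_add_right ?_ _)
  calc 75 / 4 * ‖A - B‖ * (ω y / y)
      ≤ 75 / 4 * ‖A - B‖ * (4 * (tailIntegral ω y - tailIntegral ω (2 * y))) := by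
        gcongr
        exact hω.div_le_tailIntegral_sub hi hy
    _ = _ := by ring

theorem norm_cfc_sub_le_add {𝒜 : Type*} [CStarAlgebra 𝒜] {g : ℝ → ℝ} {c : ℝ} (hf : Continuous f)
    (hg : Continuous g) (hfg : ∀ x, |g x - f x| ≤ c) (a b : 𝒜) :
    ‖cfc f a - cfc f b‖ ≤ ‖cfc g a - cfc g b‖ + 2 * c := by
  have close (a : 𝒜) : ‖cfc g a - cfc f a‖ ≤ c := by
    rw [← cfc_sub g f a hg.continuousOn hf.continuousOn]
    exact norm_cfc_le ((abs_nonneg _).trans (hfg 0)) fun x _ => hfg x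
  calc ‖cfc f a - cfc f b‖
      = ‖cfc g a - cfc g b - (cfc g a - cfc f a) + (cfc g b - cfc f b)‖ := by
        congr 1
        abel
    _ ≤ ‖cfc g a - cfc g b‖ + ‖cfc g a - cfc f a‖ + ‖cfc g b - cfc f b‖ :=
        (norm_add_le _ _).trans (add_le_add_left (norm_sub_le _ _) _)
    _ ≤ ‖cfc g a - cfc g b‖ + 2 * c := by linarith [close a, close b]

theorem norm_cfc_sub_le_of_bounded (hω : IsModulus ω)
    (hi : IntegrableOn (fun t => ω t / t ^ 2) (Ioi 1))
    (hf : ∀ x y, |f x - f y| ≤ ω |x - y|) (hM : ∀ x, |f x| ≤ M)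
    (hA : IsSelfAdjoint A) (hB : IsSelfAdjoint B) (hAB : A ≠ B) :
    ‖cfc f A - cfc f B‖ ≤ 147 * (‖A - B‖ * tailIntegral ω ‖A - B‖) := by
  have hδ : 0 < ‖A - B‖ := norm_sub_pos_iff.2 hAB
  have hc := hω.continuous hf
  calc ‖cfc f A - cfc f B‖
      ≤ ‖cfc (smoothing ‖A - B‖ f) A - cfc (smoothing ‖A - B‖ f) B‖ + 2 * (9 * ω ‖A - B‖) :=
        norm_cfc_sub_le_add hc (continuous_smoothing hc hM hδ)
          (abs_smoothing_sub_le hω hf hM hδ) A B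
    _ ≤ 75 * ‖A - B‖ * tailIntegral ω ‖A - B‖ +
          2 * (9 * (4 * (‖A - B‖ * tailIntegral ω ‖A - B‖))) := by
        gcongr
        · exact norm_cfc_smoothing_sub_le hω hi hf hM hA hB hδ
        · exact hω.map_le_tailIntegral hi hδ
    _ = 147 * (‖A - B‖ * tailIntegral ω ‖A - B‖) := by ring

end Estimate

end OperatorModulus

/-- Aleksandrov–Peller estimate via moduli of continuity: if `ω` is a modulus of
continuity with `∫_1^∞ ω(t)/t² dt < ∞`, and `|f(x) − f(y)| ≤ ω(|x−y|)`, then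
`‖f(A) − f(B)‖ ≤ c·ω_*(‖A−B‖)` where `ω_*(x) = x·∫_x^∞ ω(t)/t² dt`, for an absolute
constant `c`. -/
theorem operator_estimate_modulus_of_continuity :
    ∃ c : ℝ, 0 < c ∧
      ∀ (ω : ℝ → ℝ),
        ContinuousOn ω (Set.Ici 0) →
        MonotoneOn ω (Set.Ici 0) →
        (∀ s t : ℝ, 0 ≤ s → 0 ≤ t → ω (s + t) ≤ ω s + ω t) →
        ω 0 = 0 →
        IntegrableOn (fun t : ℝ => ω t / t ^ 2) (Set.Ioi 1) →
      ∀ (H : Type*) [NormedAddCommGroup H] [InnerProductSpace ℂ H] [CompleteSpace H],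
      ∀ (f : ℝ → ℝ), (∀ x y : ℝ, |f x - f y| ≤ ω |x - y|) →
      ∀ (A B : H →L[ℂ] H), IsSelfAdjoint A → IsSelfAdjoint B → A ≠ B →
        ‖cfc f A - cfc f B‖ ≤ c * (‖A - B‖ * ∫ t in Set.Ioi ‖A - B‖, ω t / t ^ 2) := by
  refine ⟨147, by norm_num, ?_⟩
  intro ω hω_cont hω_mono hω_add hω_zero hi H _ _ _ f hf A B hA hB hAB
  have hω : OperatorModulus.IsModulus ω := ⟨hω_cont, hω_mono, hω_add, hω_zero⟩
  obtain ⟨g, M, hg, hM, hfg⟩ := hω.exists_bounded_eqOn hf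
    ((spectrum.isBounded (𝕜 := ℝ) A).union (spectrum.isBounded (𝕜 := ℝ) B))
  rw [cfc_congr (hfg.mono Set.subset_union_left), cfc_congr (hfg.mono Set.subset_union_right)]
  exact OperatorModulus.norm_cfc_sub_le_of_bounded hω hi hg hM hA hB hAB
end

section
/- Let f : ℝ → ℝ be Lipschitz with constant L, i.e., |f(x) − f(y)| ≤ L·|x − y| for all x, y ∈ ℝ, and let A, B be bounded self-adjoint operators on a separable complex Hilbert space H. Then for every Hilbert basis (e_i) of H, Σ_i ‖(f(A) − f(B)) e_i‖² ≤ L²·Σ_i ‖(A − B) e_i‖² (both sums computed in [0, ∞]). In other words, ‖f(A) − f(B)‖_{S₂} ≤ L·‖A − B‖_{S₂}: if A − B is Hilbert–Schmidt then so is f(A) − f(B), with the exact constant L. -/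
open scoped ENNReal

/-!
In an eigenbasis `u` of `A` and an eigenbasis `v` of `B`, with eigenvalues `a` and `b`, the matrix
entries of `A - B` and `f(A) - f(B)` are `(a j - b k) ⟪u j, v k⟫` and
`(f (a j) - f (b k)) ⟪u j, v k⟫`, so that the Lipschitz bound holds entrywise; the sum of the
squares of the entries is the squared Hilbert–Schmidt norm. This settles compact operators.
In general, let `P` be the projection onto the span of finitely many vectors of the Hilbert basis.
Compression `T ↦ P T P` does not increase the Hilbert–Schmidt norm and, as `P` increases to the
identity, `P A P → A` strongly. By Weierstrass approximation `f(P A P) → f(A)` strongly, and the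
Hilbert–Schmidt norm is lower semicontinuous for strong convergence.
-/

open Filter Topology Polynomial ContinuousLinearMap
open scoped InnerProductSpace NNReal

section StrongConvergence

variable {𝕜 E F J : Type*} [NontriviallyNormedField 𝕜] [SeminormedAddCommGroup E]
  [NormedSpace 𝕜 E] [SeminormedAddCommGroup F] [NormedSpace 𝕜 F] {l : Filter J} {R : ℝ}

theorem tendsto_apply_of_tendsto_of_norm_le {S : J → E →L[𝕜] F} {T : E →L[𝕜] F} {y : J → E} {x : E}
    (hST : ∀ z, Tendsto (fun j ↦ S j z) l (𝓝 (T z))) (hR : ∀ j, ‖S j‖ ≤ R)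
    (hy : Tendsto y l (𝓝 x)) : Tendsto (fun j ↦ S j (y j)) l (𝓝 (T x)) := by
  have error : Tendsto (fun j ↦ S j (y j - x)) l (𝓝 0) := by
    refine squeeze_zero_norm (fun j ↦ (S j).le_of_opNorm_le (hR j) _) ?_
    simpa using (tendsto_iff_norm_sub_tendsto_zero.1 hy).const_mul R
  simpa using error.add (hST x)

theorem tendsto_aeval_apply_of_norm_le {A : Type*} [CommSemiring A] [Algebra A (E →L[𝕜] E)]
    {S : J → E →L[𝕜] E} {T : E →L[𝕜] E}
    (hST : ∀ x, Tendsto (fun j ↦ S j x) l (𝓝 (T x))) (hR : ∀ j, ‖S j‖ ≤ R) (p : A[X]) (x : E) :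
    Tendsto (fun j ↦ aeval (S j) p x) l (𝓝 (aeval T p x)) := by
  have tendsto_pow (n : ℕ) : Tendsto (fun j ↦ (S j ^ n) x) l (𝓝 ((T ^ n) x)) := by
    induction n with
    | zero => simpa using tendsto_const_nhds
    | succ n ih =>
      simpa only [pow_succ', mul_apply_eq_comp] using
        tendsto_apply_of_tendsto_of_norm_le hST hR ih
  induction p using Polynomial.induction_on' with
  | add p q hp hq => simpa using hp.add hq
  | monomial n c =>
    simpa only [aeval_monomial, mul_apply_eq_comp, Function.comp_def] using
      ((algebraMap A (E →L[𝕜] E) c).continuous.tendsto _).comp (tendsto_pow n)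

end StrongConvergence

section HilbertSchmidt

variable {𝕜 E F ι κ μ : Type*} [RCLike 𝕜] [NormedAddCommGroup E] [InnerProductSpace 𝕜 E]
  [NormedAddCommGroup F] [InnerProductSpace 𝕜 F]

theorem tsum_enorm_inner_sq (e : HilbertBasis ι 𝕜 E) (x : E) :
    ∑' i, ‖⟪e i, x⟫_𝕜‖ₑ ^ 2 = ‖x‖ₑ ^ 2 := by
  have parseval : HasSum (fun i ↦ ‖⟪e i, x⟫_𝕜‖ ^ 2) (‖x‖ ^ 2) := by
    simpa [e.repr_apply_apply] using lp.hasSum_norm (p := 2) (by simp) (e.repr x)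
  simp_rw [← ofReal_norm, ← ENNReal.ofReal_pow (norm_nonneg _)]
  rw [← ENNReal.ofReal_tsum_of_nonneg (fun _ ↦ by positivity) parseval.summable, parseval.tsum_eq]

/-- The squared Hilbert–Schmidt norm `∑ ‖T (e i)‖²`, with values in `[0, ∞]`. It does not depend on
the Hilbert basis `e`, by `hilbertSchmidtNormSq_congr`. -/
noncomputable def hilbertSchmidtNormSq (e : HilbertBasis ι 𝕜 E) (T : E →L[𝕜] F) : ℝ≥0∞ :=
  ∑' i, ‖T (e i)‖ₑ ^ 2

theorem hilbertSchmidtNormSq_le_of_tendsto {J : Type*} {l : Filter J} [l.NeBot]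
    {e : HilbertBasis ι 𝕜 E} {S : J → E →L[𝕜] F} {T : E →L[𝕜] F} {C : ℝ≥0∞}
    (hS : ∀ i, Tendsto (fun j ↦ S j (e i)) l (𝓝 (T (e i))))
    (hC : ∀ᶠ j in l, hilbertSchmidtNormSq e (S j) ≤ C) : hilbertSchmidtNormSq e T ≤ C := by
  rw [hilbertSchmidtNormSq, ENNReal.tsum_eq_iSup_sum]
  refine iSup_le fun t ↦ ?_
  have partial_sums : Tendsto (fun j ↦ ∑ i ∈ t, ‖S j (e i)‖ₑ ^ 2) l
      (𝓝 (∑ i ∈ t, ‖T (e i)‖ₑ ^ 2)) :=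
    tendsto_finsetSum t fun i _ ↦ ((ENNReal.continuous_pow 2).tendsto _).comp (hS i).enorm
  exact le_of_tendsto partial_sums (hC.mono fun j hj ↦ (ENNReal.sum_le_tsum t).trans hj)

variable [CompleteSpace E] [CompleteSpace F]

theorem hilbertSchmidtNormSq_adjoint (e : HilbertBasis ι 𝕜 E) (u : HilbertBasis κ 𝕜 F)
    (T : E →L[𝕜] F) : hilbertSchmidtNormSq u (adjoint T) = hilbertSchmidtNormSq e T := by
  simp_rw [hilbertSchmidtNormSq, ← tsum_enorm_inner_sq e, ← tsum_enorm_inner_sq u]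
  rw [ENNReal.tsum_comm]
  refine tsum_congr fun i ↦ tsum_congr fun k ↦ ?_
  rw [adjoint_inner_right, ← ofReal_norm, ← ofReal_norm, norm_inner_symm]

theorem hilbertSchmidtNormSq_congr (e : HilbertBasis ι 𝕜 E) (v : HilbertBasis μ 𝕜 E)
    (T : E →L[𝕜] F) : hilbertSchmidtNormSq e T = hilbertSchmidtNormSq v T := by
  obtain ⟨_, u, _⟩ := exists_hilbertBasis 𝕜 F
  rw [← hilbertSchmidtNormSq_adjoint e u, hilbertSchmidtNormSq_adjoint v u]

theorem hilbertSchmidtNormSq_eq_tsum_tsum_inner (e : HilbertBasis ι 𝕜 E) (u : HilbertBasis κ 𝕜 F)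
    (v : HilbertBasis μ 𝕜 E) (T : E →L[𝕜] F) :
    hilbertSchmidtNormSq e T = ∑' (k) (j), ‖⟪u j, T (v k)⟫_𝕜‖ₑ ^ 2 := by
  simp_rw [hilbertSchmidtNormSq_congr e v, hilbertSchmidtNormSq, tsum_enorm_inner_sq]

end HilbertSchmidt

section Compression

variable {𝕜 E : Type*} [RCLike 𝕜] [NormedAddCommGroup E] [InnerProductSpace 𝕜 E]

/-- The compression `P T P` of `T` to the subspace `U`, where `P` is the orthogonal projection
onto `U`, as an operator on the whole space. -/
noncomputable def compression (U : Submodule 𝕜 E) [U.HasOrthogonalProjection] (T : E →L[𝕜] E) :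
    E →L[𝕜] E :=
  U.starProjection ∘L T ∘L U.starProjection

section Submodule

variable (U : Submodule 𝕜 E) [U.HasOrthogonalProjection] (S T : E →L[𝕜] E)

theorem compression_sub : compression U (S - T) = compression U S - compression U T := by
  simp [compression]

theorem norm_compression_le : ‖compression U T‖ ≤ ‖T‖ := by
  refine opNorm_le_bound _ (norm_nonneg T) fun x ↦ ?_
  calc ‖compression U T x‖ ≤ ‖T (U.starProjection x)‖ := U.norm_starProjection_apply_le _
    _ ≤ ‖T‖ * ‖U.starProjection x‖ := T.le_opNorm _
    _ ≤ ‖T‖ * ‖x‖ := by gcongr; exact U.norm_starProjection_apply_le x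

end Submodule

theorem isCompactOperator_compression (U : Submodule 𝕜 E) [FiniteDimensional 𝕜 U]
    (T : E →L[𝕜] E) : IsCompactOperator (compression U T) := by
  have := FiniteDimensional.proper_rclike 𝕜 U
  exact (isCompactOperator_of_locallyCompactSpace_dom
    (U.orthogonalProjectionOnto ∘L T ∘L U.starProjection)).clm_comp U.subtypeL

theorem tendsto_compression_apply {J : Type*} {l : Filter J} {U : J → Submodule 𝕜 E}
    [∀ j, (U j).HasOrthogonalProjection]
    (hU : ∀ x, Tendsto (fun j ↦ (U j).starProjection x) l (𝓝 x)) (T : E →L[𝕜] E) (x : E) :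
    Tendsto (fun j ↦ compression (U j) T x) l (𝓝 (T x)) :=
  tendsto_apply_of_tendsto_of_norm_le (S := fun j ↦ (U j).starProjection) (T := .id 𝕜 E) hU
    (fun j ↦ (U j).starProjection_norm_le)
    ((T.continuous.tendsto x).comp (hU x))

variable {ι : Type*} (e : HilbertBasis ι 𝕜 E)

/-- The span of the finitely many basis vectors `e i`, `i ∈ s`. -/
def partialSpan (s : Finset ι) : Submodule 𝕜 E := Submodule.span 𝕜 (e '' s)

instance finiteDimensional_partialSpan (s : Finset ι) : FiniteDimensional 𝕜 (partialSpan e s) :=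
  FiniteDimensional.span_of_finite 𝕜 (s.finite_toSet.image e)

theorem tendsto_starProjection_partialSpan (x : E) :
    Tendsto (fun s ↦ (partialSpan e s).starProjection x) atTop (𝓝 x) := by
  classical
  refine Submodule.starProjection_tendsto_self (partialSpan e)
    (fun s t hst ↦ Submodule.span_mono (Set.image_mono (mod_cast hst))) x ?_
  simpa only [partialSpan, Finset.coe_image] using e.finite_spans_dense.ge

theorem starProjection_partialSpan_apply_of_mem {s : Finset ι} {i : ι} (hi : i ∈ s) :
    (partialSpan e s).starProjection (e i) = e i :=
  Submodule.starProjection_eq_self_iff.2 (Submodule.subset_span (Set.mem_image_of_mem e hi))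

theorem starProjection_partialSpan_apply_of_notMem {s : Finset ι} {i : ι} (hi : i ∉ s) :
    (partialSpan e s).starProjection (e i) = 0 := by
  have ortho : Submodule.span 𝕜 {e i} ⟂ partialSpan e s := by
    refine Submodule.isOrtho_span.2 ?_
    rintro _ rfl _ ⟨k, hk, rfl⟩
    exact e.orthonormal.inner_eq_zero fun hik ↦ hi (hik ▸ hk)
  exact (Submodule.starProjection_apply_eq_zero_iff _).2
    (ortho.le (Submodule.mem_span_singleton_self _))

theorem hilbertSchmidtNormSq_compression_partialSpan_le (s : Finset ι) (T : E →L[𝕜] E) :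
    hilbertSchmidtNormSq e (compression (partialSpan e s) T) ≤ hilbertSchmidtNormSq e T := by
  refine ENNReal.tsum_le_tsum fun i ↦ ?_
  gcongr
  refine enorm_le_iff_norm_le.2 ((Submodule.norm_starProjection_apply_le _ _).trans ?_)
  by_cases hi : i ∈ s
  · simp [starProjection_partialSpan_apply_of_mem e hi]
  · simp [starProjection_partialSpan_apply_of_notMem e hi]

end Compression

section FunctionalCalculus

theorem aeval_smul_of_smul_eq_algebraMap_smul {R 𝒜 M : Type*} [CommSemiring R] [Semiring 𝒜]
    [Algebra R 𝒜] [AddCommMonoid M] [Module 𝒜 M] {T : 𝒜} {a : R} {x : M}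
    (hx : T • x = algebraMap R 𝒜 a • x) (p : R[X]) :
    aeval T p • x = algebraMap R 𝒜 (p.eval a) • x := by
  have pow_smul (n : ℕ) : T ^ n • x = algebraMap R 𝒜 (a ^ n) • x := by
    induction n with
    | zero => simp
    | succ n ih =>
      rw [pow_succ', mul_smul, ih, smul_smul, ← Algebra.commutes, mul_smul, hx, smul_smul,
        ← map_mul, pow_succ]
  induction p using Polynomial.induction_on' with
  | add p q hp hq => simp only [map_add, eval_add, add_smul, hp, hq]
  | monomial n c => rw [aeval_monomial, eval_monomial, mul_smul, pow_smul, smul_smul, map_mul]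

theorem exists_tendstoUniformlyOn_aeval_cfc {𝒜 : Type*} [CStarAlgebra 𝒜] {f : ℝ → ℝ} {R : ℝ}
    (hf : ContinuousOn f (Set.Icc (-R) R)) :
    ∃ p : ℕ → ℝ[X], TendstoUniformlyOn (fun n (T : 𝒜) ↦ aeval T (p n)) (cfc f) atTop
      {T | IsSelfAdjoint T ∧ ‖T‖ ≤ R} := by
  choose p hp using fun n : ℕ ↦
    exists_polynomial_near_of_continuousOn (-R) R f hf (1 / (n + 1)) Nat.one_div_pos_of_nat
  refine ⟨p, Metric.tendstoUniformlyOn_iff.2 fun ε hε ↦ ?_⟩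
  filter_upwards [tendsto_one_div_add_atTop_nhds_zero_nat.eventually_lt_const hε]
    with n hn T ⟨hT, hTR⟩
  have spectrum_subset : spectrum ℝ T ⊆ Set.Icc (-R) R := fun x hx ↦ by
    have : Nontrivial 𝒜 := not_subsingleton_iff_nontrivial.1 fun _ ↦ by
      simp [spectrum.of_subsingleton] at hx
    exact abs_le.1 ((spectrum.norm_le_norm_of_mem hx).trans hTR)
  rw [dist_comm, dist_eq_norm, ← cfc_polynomial (p n) T hT,
    ← cfc_sub _ f T (by fun_prop) (hf.mono spectrum_subset)]
  exact (norm_cfc_le Nat.one_div_pos_of_nat.le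
    fun x hx ↦ (hp n x (spectrum_subset hx)).le).trans_lt hn

variable {H J : Type*} [NormedAddCommGroup H] [InnerProductSpace ℂ H] [CompleteSpace H]
  {f : ℝ → ℝ} {T : H →L[ℂ] H}

theorem tendsto_cfc_apply_of_norm_le {l : Filter J} {S : J → H →L[ℂ] H} {R : ℝ} (hf : Continuous f)
    (hST : ∀ x, Tendsto (fun j ↦ S j x) l (𝓝 (T x))) (hR : ∀ j, ‖S j‖ ≤ R)
    (hS : ∀ j, IsSelfAdjoint (S j)) (hT : IsSelfAdjoint T) (x : H) :
    Tendsto (fun j ↦ cfc f (S j) x) l (𝓝 (cfc f T x)) := by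
  obtain ⟨p, hp⟩ := exists_tendstoUniformlyOn_aeval_cfc (𝒜 := H →L[ℂ] H)
    (hf.continuousOn (s := Set.Icc (-max R ‖T‖) (max R ‖T‖)))
  have uniform : TendstoUniformlyOnFilter (fun n j ↦ aeval (S j) (p n) x)
      (fun j ↦ cfc f (S j) x) atTop l := by
    refine (tendstoUniformlyOn_univ.1 ?_).tendstoUniformlyOnFilter.mono_right le_top
    refine ((ContinuousLinearMap.apply ℂ H x).uniformContinuous.comp_tendstoUniformlyOn
      (hp.comp S)).mono fun j _ ↦ ⟨hS j, (hR j).trans (le_max_left _ _)⟩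
  have at_limit : Tendsto (fun n ↦ aeval T (p n) x) atTop (𝓝 (cfc f T x)) :=
    ((ContinuousLinearMap.apply ℂ H x).continuous.tendsto _).comp
      (hp.tendsto_at ⟨hT, le_max_right _ _⟩)
  exact uniform.tendsto_of_eventually_tendsto
    (.of_forall fun n ↦ tendsto_aeval_apply_of_norm_le hST hR (p n) x) at_limit

theorem cfc_apply_of_apply_eq_smul {a : ℝ} {x : H} (hf : Continuous f) (hT : IsSelfAdjoint T)
    (hx : T x = a • x) : cfc f T x = f a • x := by
  let scalar : H →L[ℂ] H := algebraMap ℝ (H →L[ℂ] H) a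
  have aeval_eq (q : ℝ[X]) : aeval T q x = aeval scalar q x := by
    rw [aeval_algebraMap_apply_eq_algebraMap_eval]
    exact aeval_smul_of_smul_eq_algebraMap_smul (T := T) (a := a) (x := x) hx q
  obtain ⟨p, hp⟩ := exists_tendstoUniformlyOn_aeval_cfc (𝒜 := H →L[ℂ] H)
    (hf.continuousOn (s := Set.Icc (-max ‖T‖ ‖scalar‖) (max ‖T‖ ‖scalar‖)))
  have eval_continuous := (ContinuousLinearMap.apply ℂ H x).continuous
  have at_T : Tendsto (fun n ↦ aeval T (p n) x) atTop (𝓝 (cfc f T x)) :=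
    (eval_continuous.tendsto _).comp (hp.tendsto_at ⟨hT, le_max_left _ _⟩)
  have at_scalar : Tendsto (fun n ↦ aeval scalar (p n) x) atTop (𝓝 (cfc f scalar x)) :=
    (eval_continuous.tendsto _).comp
      (hp.tendsto_at ⟨(IsSelfAdjoint.all a).algebraMap _, le_max_right _ _⟩)
  simp_rw [aeval_eq] at at_T
  rw [tendsto_nhds_unique at_T at_scalar, cfc_algebraMap]
  rfl

end FunctionalCalculus

section Eigenbasis

universe u v

theorem exists_hilbertBasis_mem_of_orthogonalFamily {𝕜 E κ : Type*} [RCLike 𝕜]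
    [NormedAddCommGroup E] [InnerProductSpace 𝕜 E] [CompleteSpace E] {V : κ → Submodule 𝕜 E}
    [∀ k, CompleteSpace (V k)] (hV : OrthogonalFamily 𝕜 (fun k ↦ V k) fun k ↦ (V k).subtypeₗᵢ)
    (hV' : (⨆ k, V k)ᗮ = ⊥) :
    ∃ (w : ∀ k, Set (V k)) (b : HilbertBasis (Σ k, w k) 𝕜 E), ∀ i, b i ∈ V i.1 := by
  choose w c _ using fun k ↦ exists_hilbertBasis 𝕜 (V k)
  have orthonormal := hV.orthonormal_sigma_orthonormal fun k ↦ (c k).orthonormal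
  refine ⟨w, .mkOfOrthogonalEqBot orthonormal ?_, fun i ↦ by simp⟩
  rw [← le_bot_iff, ← hV', ← Submodule.iInf_orthogonal]
  refine le_iInf fun k x hx ↦ ?_
  have coeff_eq_zero (i : w k) : ⟪(c k i : E), x⟫_𝕜 = 0 :=
    (Submodule.mem_orthogonal _ x).1 hx _ (Submodule.subset_span ⟨⟨k, i⟩, rfl⟩)
  have expansion := (c k).hasSum_orthogonalProjectionOnto x
  simp only [coeff_eq_zero, zero_smul] at expansion
  exact Submodule.orthogonalProjectionOnto_eq_zero_iff.1 (expansion.unique hasSum_zero)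

theorem exists_hilbertBasis_eigenvectors {𝕜 : Type u} {E : Type v} [RCLike 𝕜]
    [NormedAddCommGroup E] [InnerProductSpace 𝕜 E] [CompleteSpace E] {T : E →L[𝕜] E}
    (hT : IsCompactOperator T) (hT' : T.IsSymmetric) :
    ∃ (κ : Type (max u v)) (u : HilbertBasis κ 𝕜 E) (a : κ → ℝ),
      ∀ k, T (u k) = (a k : 𝕜) • u k := by
  have (z : 𝕜) : CompleteSpace (Module.End.eigenspace (T : E →ₗ[𝕜] E) z) := by
    have : IsClosed ((Module.End.eigenspace (T : E →ₗ[𝕜] E) z : Submodule 𝕜 E) : Set E) := by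
      rw [Module.End.eigenspace_def]
      exact (T - algebraMap 𝕜 (E →L[𝕜] E) z).isClosed_ker
    exact this.completeSpace_coe
  obtain ⟨w, u, hu⟩ := exists_hilbertBasis_mem_of_orthogonalFamily
    hT'.orthogonalFamily_eigenspaces (orthogonalComplement_iSup_eigenspaces_eq_bot hT hT')
  refine ⟨Σ z, w z, u, fun k ↦ RCLike.re k.1, fun k ↦ ?_⟩
  have real : ((RCLike.re k.1 : ℝ) : 𝕜) = k.1 := RCLike.conj_eq_iff_re.1
    (hT'.conj_eigenvalue_eq_self
      (Module.End.hasEigenvalue_of_hasEigenvector ⟨hu k, u.orthonormal.ne_zero k⟩))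
  rw [real]
  exact Module.End.mem_eigenspace_iff.1 (hu k)

end Eigenbasis

section Lipschitz

variable {H ι : Type*} [NormedAddCommGroup H] [InnerProductSpace ℂ H] [CompleteSpace H]
  {A B : H →L[ℂ] H}

theorem inner_sub_apply_of_apply_eq_smul {a b : ℝ} {x y : H} (hA : IsSelfAdjoint A)
    (hx : A x = a • x) (hy : B y = b • y) : ⟪x, (A - B) y⟫_ℂ = (a - b) • ⟪x, y⟫_ℂ := by
  rw [sub_apply, inner_sub_right, ← hA.isSymmetric.apply_clm, hx, hy, inner_smul_left_eq_smul,
    inner_smul_right_eq_smul, sub_smul]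

variable {K : ℝ≥0} {f : ℝ → ℝ} (e : HilbertBasis ι ℂ H)

theorem hilbertSchmidtNormSq_cfc_sub_le_of_eigenbasis {κ μ : Type*} (hf : LipschitzWith K f)
    (hA : IsSelfAdjoint A) (hB : IsSelfAdjoint B) (u : HilbertBasis κ ℂ H) {a : κ → ℝ}
    (hu : ∀ j, A (u j) = a j • u j) (v : HilbertBasis μ ℂ H) {b : μ → ℝ}
    (hv : ∀ k, B (v k) = b k • v k) :
    hilbertSchmidtNormSq e (cfc f A - cfc f B) ≤ K ^ 2 * hilbertSchmidtNormSq e (A - B) := by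
  simp_rw [hilbertSchmidtNormSq_eq_tsum_tsum_inner e u v, ← ENNReal.tsum_mul_left]
  refine ENNReal.tsum_le_tsum fun k ↦ ENNReal.tsum_le_tsum fun j ↦ ?_
  have huf := cfc_apply_of_apply_eq_smul hf.continuous hA (hu j)
  have hvf := cfc_apply_of_apply_eq_smul hf.continuous hB (hv k)
  rw [inner_sub_apply_of_apply_eq_smul hA (hu j) (hv k),
    inner_sub_apply_of_apply_eq_smul (cfc_predicate f A) huf hvf, enorm_smul, enorm_smul,
    ← mul_pow, ← mul_assoc]
  gcongr
  simpa only [edist_eq_enorm_sub] using hf (a j) (b k)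

theorem hilbertSchmidtNormSq_cfc_sub_le_of_isCompactOperator (hf : LipschitzWith K f)
    (hA : IsSelfAdjoint A) (hB : IsSelfAdjoint B) (hA' : IsCompactOperator A)
    (hB' : IsCompactOperator B) :
    hilbertSchmidtNormSq e (cfc f A - cfc f B) ≤ K ^ 2 * hilbertSchmidtNormSq e (A - B) := by
  obtain ⟨_, u, a, hu⟩ := exists_hilbertBasis_eigenvectors hA' hA.isSymmetric
  obtain ⟨_, v, b, hv⟩ := exists_hilbertBasis_eigenvectors hB' hB.isSymmetric
  exact hilbertSchmidtNormSq_cfc_sub_le_of_eigenbasis e hf hA hB u hu v hv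

theorem hilbertSchmidtNormSq_cfc_sub_le (hf : LipschitzWith K f)
    (hA : IsSelfAdjoint A) (hB : IsSelfAdjoint B) :
    hilbertSchmidtNormSq e (cfc f A - cfc f B) ≤ K ^ 2 * hilbertSchmidtNormSq e (A - B) := by
  have selfAdjoint {T : H →L[ℂ] H} (hT : IsSelfAdjoint T) (s : Finset ι) :
      IsSelfAdjoint (compression (partialSpan e s) T) := hT.conj_starProjection _
  have tendsto_cfc {T : H →L[ℂ] H} (hT : IsSelfAdjoint T) (x : H) :
      Tendsto (fun s ↦ cfc f (compression (partialSpan e s) T) x) atTop (𝓝 (cfc f T x)) :=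
    tendsto_cfc_apply_of_norm_le hf.continuous
      (tendsto_compression_apply (tendsto_starProjection_partialSpan e) T)
      (fun s ↦ norm_compression_le _ T) (selfAdjoint hT) hT x
  refine hilbertSchmidtNormSq_le_of_tendsto
    (S := fun s ↦ cfc f (compression (partialSpan e s) A) - cfc f (compression (partialSpan e s) B))
    (fun i ↦ (tendsto_cfc hA (e i)).sub (tendsto_cfc hB (e i))) (.of_forall fun s ↦ ?_)
  grw [hilbertSchmidtNormSq_cfc_sub_le_of_isCompactOperator e hf (selfAdjoint hA s)
    (selfAdjoint hB s) (isCompactOperator_compression _ A) (isCompactOperator_compression _ B),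
    ← compression_sub, hilbertSchmidtNormSq_compression_partialSpan_le]

theorem lipschitz_hilbert_schmidt_general
    (hf : LipschitzOnWith K f (spectrum ℝ A ∪ spectrum ℝ B))
    (hA : IsSelfAdjoint A) (hB : IsSelfAdjoint B) :
    hilbertSchmidtNormSq e (cfc f A - cfc f B) ≤ K ^ 2 * hilbertSchmidtNormSq e (A - B) := by
  obtain ⟨g, hg, hfg⟩ := hf.extend_real
  rw [cfc_congr (hfg.mono Set.subset_union_left), cfc_congr (hfg.mono Set.subset_union_right)]
  exact hilbertSchmidtNormSq_cfc_sub_le e hg hA hB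

end Lipschitz

/-- Birman–Solomyak: a Lipschitz function with constant `L` satisfies
`‖f(A) − f(B)‖_{S₂} ≤ L·‖A − B‖_{S₂}` for bounded self-adjoint operators `A, B` on a
separable complex Hilbert space; the Hilbert–Schmidt norms are computed in `[0,∞]` via
any Hilbert basis. -/
theorem lipschitz_hilbert_schmidt
    {H : Type*} [NormedAddCommGroup H] [InnerProductSpace ℂ H] [CompleteSpace H]
    [TopologicalSpace.SeparableSpace H]
    (f : ℝ → ℝ) (L : ℝ) (hf : ∀ x y : ℝ, |f x - f y| ≤ L * |x - y|)
    (A B : H →L[ℂ] H) (hA : IsSelfAdjoint A) (hB : IsSelfAdjoint B) :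
    ∀ (ι : Type*) (e : HilbertBasis ι ℂ H),
      ∑' i : ι, (‖(cfc f A - cfc f B) (e i)‖₊ : ℝ≥0∞) ^ 2
        ≤ ENNReal.ofReal L ^ 2 * ∑' i : ι, (‖(A - B) (e i)‖₊ : ℝ≥0∞) ^ 2 := fun _ e ↦
  lipschitz_hilbert_schmidt_general e (LipschitzWith.of_dist_le' hf).lipschitzOnWith hA hB
end
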